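/- arXiv:1307.0554 — 5 statements merged into one kernel-verified Lean document; each statement's English description precedes it below -/
import Mathlib

section
/- Open KKM Lemma: Let Δₙ ⊆ ℝⁿ denote the standard simplex with vertices the standard basis vectors e₁, …, eₙ, and let F₁, …, Fₙ be subsets of Δₙ that are open in the subspace topology of Δₙ. Suppose that for every nonempty set of indices 1 ≤ i₁ < i₂ < ⋯ < i_p ≤ n, the face S(e_{i₁}, …, e_{i_p}) of Δₙ is contained in F_{i₁} ∪ ⋯ ∪ F_{i_p}. Then F₁ ∩ F₂ ∩ ⋯ ∩ Fₙ is nonempty. -/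
/-!
The open KKM lemma is derived from a Sperner-type theorem, itself proved by Scarf's parity argument.

*Combinatorics.* Let `Y` be a finite set with linear orders indexed by `I`, encoded by injective
ranks `r i : Y → ℕ`. A set `P ⊆ Y` is dominant if no `y` exceeds the minimum of `P` in every order.
Rooms are dominant sets of size `|I|`. Given "slack" points `s i` (lowest in order `i`, above
every non-slack point in the other orders) and a colouring with `s i` coloured `i`, doors are the
dominant sets of size `|I| - 1` with colours `I \ {i₀}`. Every door lies in exactly two rooms
(`door_two_rooms`), except for the door made of slack points, which lies in one
(`slack_door_one_room`); a room which misses a colour has zero or two doors (`even_doors`).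
Double counting yields a room with all colours (`exists_colourful_room`).

*Closed covers.* Applied to the points of the `1/N`-grid of the simplex ordered by their
coordinates, this shows, in the limit, that if closed sets `A k` cover the simplex, then some point
`x` lies in `A k` for every `k` in its support (`exists_mem_of_support`).

*KKM.* Let `δ i` be the distance to the complement of `F i`, `M x = ∑ x i * δ i x`, which is positive
by the face condition, and `e i = max 0 (M - δ i)`, `E = ∑ e i`. The closed sets
`A k = {x | x k * E x ≤ e k x}` cover the simplex. A point `x` in `A k` for all `k` in its support
satisfies `e i x = x i * E x` for all `i`. If `E x > 0`, then `δ i x < M x` on the support of `x`,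
so the weighted mean `M x` is less than itself; hence `E x = 0`, that is `δ i x ≥ M x > 0` for all
`i`, and `x` lies in every `F i`.
-/

set_option linter.unusedSectionVars false

namespace OpenKKM

open Finset

/-! ### Rooms and doors -/

section Scarf

variable {I Y : Type*} [Fintype I] [DecidableEq I] [Fintype Y] [DecidableEq Y]

/-- `P` is dominant for the orders given by the ranks `r i`: every point `y` is, in some order, at
most the minimum of `P`. -/
def Dom (r : I → Y → ℕ) (P : Finset Y) : Prop :=
  ∀ y, ∃ i, ∀ x ∈ P, r i y ≤ r i x

lemma Dom.mono {r : I → Y → ℕ} {P Q : Finset Y} (h : Dom r P) (hQ : Q ⊆ P) : Dom r Q := by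
  intro y
  obtain ⟨i, hi⟩ := h y
  exact ⟨i, fun x hx => hi x (hQ hx)⟩

/-- If `m i = m j` is the only coincidence among the minima `m k` of `Q`, then a point which can be
added to `Q` is above the minimum of `Q` in all orders but `i`, or in all orders but `j`. -/
lemma above_of_dom_insert {r : I → Y → ℕ} (hr : ∀ i, Function.Injective (r i)) {Q : Finset Y}
    {m : I → Y} (hmQ : ∀ k, m k ∈ Q) (hm : ∀ k, ∀ x ∈ Q, r k (m k) ≤ r k x)
    {i j : I} (hinj : ∀ k l, m k = m l → k = l ∨ (k = i ∧ l = j) ∨ (k = j ∧ l = i))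
    (hij : i ≠ j) (hmij : m i = m j) {x : Y} (hx : x ∉ Q) (hdom : Dom r (insert x Q)) :
    (∀ k, k ≠ i → r k (m k) < r k x) ∨ (∀ k, k ≠ j → r k (m k) < r k x) := by
  obtain ⟨k, hk⟩ := hdom x
  have hne : ∀ l, m l ≠ x := fun l h => hx (h ▸ hmQ l)
  -- each minimum `m l` of `Q` stays a minimum of `insert x Q` in some order `l'`
  have key : ∀ l, ∃ l', m l' = m l ∧ r l' (m l) < r l' x := by
    intro l
    obtain ⟨l', hl'⟩ := hdom (m l)
    refine ⟨l', hr l' (le_antisymm (hm l' _ (hmQ l)) (hl' _ (mem_insert_of_mem (hmQ l')))), ?_⟩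
    exact lt_of_le_of_ne (hl' x (mem_insert_self _ _)) fun h => hne l (hr l' h)
  have hkx : ∀ l, r k x ≤ r k (m l) := fun l => hk _ (mem_insert_of_mem (hmQ l))
  by_cases hki : k = i
  · subst hki
    left
    intro l hl
    obtain ⟨l', h1, h2⟩ := key l
    rcases hinj _ _ h1 with h | h | h
    · subst h; exact h2
    · have := hkx l; rw [h.1] at h2; omega
    · exact absurd h.2 hl
  by_cases hkj : k = j
  · subst hkj
    right
    intro l hl
    obtain ⟨l', h1, h2⟩ := key l
    rcases hinj _ _ h1 with h | h | h
    · subst h; exact h2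
    · exact absurd h.2 hl
    · have := hkx l; rw [h.1] at h2; omega
  · exfalso
    obtain ⟨l', h1, h2⟩ := key k
    have := hkx k
    rcases hinj _ _ h1 with h | h | h
    · subst h; omega
    · exact hkj h.2
    · exact hki h.2

/-- If some point lies above the minimum of `Q` in all orders but `i`, then exactly one of
these points can be added to `Q` keeping it dominant, namely the highest one in order `i`. -/
lemma exists_extension {r : I → Y → ℕ} (hr : ∀ i, Function.Injective (r i)) {Q : Finset Y}
    (hQ : Dom r Q)
    {m : I → Y} (hmQ : ∀ k, m k ∈ Q) (hm : ∀ k, ∀ x ∈ Q, r k (m k) ≤ r k x)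
    (i : I) (hM : ∃ x, ∀ k, k ≠ i → r k (m k) < r k x) :
    ∃ a, (∀ k, k ≠ i → r k (m k) < r k a) ∧ Dom r (insert a Q) ∧
      ∀ x, (∀ k, k ≠ i → r k (m k) < r k x) → Dom r (insert x Q) → x = a := by
  classical
  obtain ⟨a, ha, hamax⟩ := exists_max_image
    (univ.filter fun x => ∀ k, k ≠ i → r k (m k) < r k x) (r i)
    (by obtain ⟨x, hx⟩ := hM; exact ⟨x, by simpa using hx⟩)
  simp only [mem_filter, mem_univ, true_and] at ha hamax
  refine ⟨a, ha, ?_, ?_⟩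
  · intro y
    by_cases hy : ∀ k, k ≠ i → r k (m k) < r k y
    · refine ⟨i, fun x hx => ?_⟩
      rcases mem_insert.1 hx with rfl | hx
      · exact hamax y hy
      · obtain ⟨k, hk⟩ := hQ y
        by_cases hki : k = i
        · subst hki; exact hk x hx
        · have := hy k hki
          have := hk _ (hmQ k)
          omega
    · push Not at hy
      obtain ⟨k, hki, hk⟩ := hy
      refine ⟨k, fun x hx => ?_⟩
      rcases mem_insert.1 hx with rfl | hx
      · exact hk.trans (ha k hki).le
      · exact hk.trans (hm k x hx)
  · intro x hx hdom
    obtain ⟨l, hl⟩ := hdom a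
    have hli : l = i := by
      by_contra hli
      have := ha l hli
      have := hl _ (mem_insert_of_mem (hmQ l))
      omega
    subst hli
    exact hr l (le_antisymm (hamax x hx) (hl x (mem_insert_self _ _)))

/-- A surjection onto a set with one element less has exactly one coincidence. -/
lemma exists_pair {Q : Finset Y} (hcard : Q.card + 1 = Fintype.card I) {m : I → Y}
    (hmQ : ∀ k, m k ∈ Q) (hsurj : ∀ x ∈ Q, ∃ k, m k = x) :
    ∃ i j, i ≠ j ∧ m i = m j ∧
      ∀ k l, m k = m l → k = l ∨ (k = i ∧ l = j) ∨ (k = j ∧ l = i) := by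
  obtain ⟨i, -, j, -, hij, hmij⟩ := exists_ne_map_eq_of_card_lt_of_maps_to
    (s := (univ : Finset I)) (t := Q) (f := m) (by rw [card_univ]; omega) (fun k _ => hmQ k)
  have inj : ∀ i j, i ≠ j → m i = m j → Set.InjOn m (univ.erase i : Finset I) := by
    intro i j hij hmij
    apply injOn_of_card_image_eq
    have : (univ.erase i).image m = Q := by
      ext x
      simp only [mem_image, mem_erase, mem_univ, and_true]
      constructor
      · rintro ⟨k, -, rfl⟩; exact hmQ k
      · intro hx
        obtain ⟨k, rfl⟩ := hsurj x hx
        by_cases hk : k = i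
        · exact ⟨j, hij.symm, by rw [hk, hmij]⟩
        · exact ⟨k, hk, rfl⟩
    rw [this, card_erase_of_mem (mem_univ _), card_univ]
    omega
  have h1 := inj i j hij hmij
  have h2 := inj j i hij.symm hmij.symm
  refine ⟨i, j, hij, hmij, fun k l hkl => ?_⟩
  have g1 : k ≠ i → l ≠ i → k = l := fun a b => h1 (by simpa using a) (by simpa using b) hkl
  have g2 : k ≠ j → l ≠ j → k = l := fun a b => h2 (by simpa using a) (by simpa using b) hkl
  grind

/-- A dominant set of size `|I| - 1` that contains a point `q` below all slack points
`s j` with `j ≠ i` in each order `i` lies in exactly two rooms. The slack points guarantee that both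
extensions exist. -/
lemma door_two_rooms {r : I → Y → ℕ} (hr : ∀ i, Function.Injective (r i)) {s : I → Y}
    {Q : Finset Y} (hQ : Dom r Q) (hcard : Q.card + 1 = Fintype.card I) {q : Y} (hq : q ∈ Q)
    (hqs : ∀ i j, j ≠ i → r i q < r i (s j)) :
    ∃ a b, a ≠ b ∧ a ∉ Q ∧ b ∉ Q ∧ Dom r (insert a Q) ∧ Dom r (insert b Q) ∧
      ∀ x, x ∉ Q → Dom r (insert x Q) → x = a ∨ x = b := by
  choose m hmQ hm using fun k => exists_min_image Q (r k) ⟨q, hq⟩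
  have hsurj : ∀ x ∈ Q, ∃ k, m k = x := by
    intro x hx
    obtain ⟨k, hk⟩ := hQ x
    exact ⟨k, hr k (le_antisymm (hm k x hx) (hk _ (hmQ k)))⟩
  obtain ⟨i, j, hij, hmij, hinj⟩ := exists_pair hcard hmQ hsurj
  have hM : ∀ i, ∃ x, ∀ k, k ≠ i → r k (m k) < r k x := fun i =>
    ⟨s i, fun k hk => (hm k q hq).trans_lt (hqs k i hk.symm)⟩
  obtain ⟨a, ha, hda, hua⟩ := exists_extension hr hQ hmQ hm i (hM i)
  obtain ⟨b, hb, hdb, hub⟩ := exists_extension hr hQ hmQ hm j (hM j)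
  have hnot : ∀ i j x, i ≠ j → m i = m j → (∀ k, k ≠ i → r k (m k) < r k x) → x ∉ Q := by
    intro i j x hij hmij hx hxQ
    obtain ⟨k, rfl⟩ := hsurj x hxQ
    by_cases hk : k = i
    · subst hk
      have := hx j hij.symm
      rw [hmij] at this
      omega
    · exact lt_irrefl _ (hx k hk)
  refine ⟨a, b, ?_, hnot i j a hij hmij ha, hnot j i b hij.symm hmij.symm hb, hda, hdb, ?_⟩
  · rintro rfl
    obtain ⟨k, hk⟩ := hQ a
    have hk' := hk _ (hmQ k)
    by_cases hki : k = i
    · have := hb k (by rw [hki]; exact hij)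
      omega
    · have := ha k hki
      omega
  · intro x hx hd
    rcases above_of_dom_insert hr hmQ hm hinj hij hmij hx hd with h | h
    · exact Or.inl (hua x h hd)
    · exact Or.inr (hub x h hd)

/-- The door made of all slack points except `s i₀` lies in exactly one room. -/
lemma slack_door_one_room {r : I → Y → ℕ} (hr : ∀ i, Function.Injective (r i)) {s : I → Y}
    (hs1 : ∀ i y, r i (s i) ≤ r i y)
    (hs2 : ∀ i j, j ≠ i → ∀ y, (∀ k, s k ≠ y) → r i y < r i (s j))
    (hY : ∃ y, ∀ k, s k ≠ y) (i₀ : I) :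
    ∃ a, a ∉ (univ.erase i₀).image s ∧ Dom r (insert a ((univ.erase i₀).image s)) ∧
      ∀ x, x ∉ (univ.erase i₀).image s → Dom r (insert x ((univ.erase i₀).image s)) → x = a := by
  classical
  obtain ⟨y₀, hy₀⟩ := hY
  obtain ⟨a, ha, hamax⟩ := exists_max_image (univ.filter fun y => ∀ k, s k ≠ y) (r i₀)
    ⟨y₀, by simpa using hy₀⟩
  simp only [mem_filter, mem_univ, true_and] at ha hamax
  refine ⟨a, ?_, ?_, ?_⟩
  · simp only [mem_image, not_exists, not_and]
    exact fun k _ => ha k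
  · intro y
    by_cases hy : ∀ k, s k ≠ y
    · refine ⟨i₀, fun x hx => ?_⟩
      rcases mem_insert.1 hx with rfl | hx
      · exact hamax y hy
      · obtain ⟨j, hj, rfl⟩ := mem_image.1 hx
        exact (hs2 i₀ j (ne_of_mem_erase hj) y hy).le
    · push Not at hy
      obtain ⟨k, rfl⟩ := hy
      exact ⟨k, fun x _ => hs1 k x⟩
  · intro x hx hd
    have hxs : ∀ k, s k ≠ x := by
      rintro k rfl
      have hk : k = i₀ := by
        by_contra hk
        exact hx (mem_image_of_mem _ (by simpa using hk))
      subst hk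
      -- the set of all slack points is not dominant
      obtain ⟨i, hi⟩ := hd y₀
      have : r i y₀ ≤ r i (s i) := by
        apply hi
        by_cases h : i = k
        · rw [h]; exact mem_insert_self _ _
        · exact mem_insert_of_mem (mem_image_of_mem _ (by simpa using h))
      exact hy₀ i (hr i (le_antisymm (hs1 i y₀) this))
    obtain ⟨i, hi⟩ := hd a
    have hii : i = i₀ := by
      by_contra h
      have h1 := hi (s i) (mem_insert_of_mem (mem_image_of_mem _ (by simpa using h)))
      exact ha i (hr i (le_antisymm (hs1 i a) h1))
    subst hii
    exact hr i (le_antisymm (hamax x hxs) (hi x (mem_insert_self _ _)))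

/-- A set of size `|I|` missing a colour has an even number (zero or two) of subsets of size
`|I| - 1` with colours `I \ {i₀}`. -/
lemma even_doors (c : Y → I) (i₀ : I) {P : Finset Y} (hP : P.card = Fintype.card I)
    (hc : P.image c ≠ univ) :
    Even (univ.filter fun Q : Finset Y =>
      Q.card + 1 = Fintype.card I ∧ Q.image c = univ.erase i₀ ∧ Q ⊆ P).card := by
  set S := univ.filter fun Q : Finset Y =>
      Q.card + 1 = Fintype.card I ∧ Q.image c = univ.erase i₀ ∧ Q ⊆ P with hS
  rcases S.eq_empty_or_nonempty with h | ⟨Q, hQ⟩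
  · simp [h]
  have hQ' := hQ
  simp only [hS, mem_filter, mem_univ, true_and] at hQ
  obtain ⟨hQc, hQi, hQP⟩ := hQ
  obtain ⟨x, hx, rfl⟩ := (exists_eq_insert_iff (s := Q) (t := P)).2 ⟨hQP, by omega⟩
  have hinj : Set.InjOn c Q := by
    apply injOn_of_card_image_eq
    rw [hQi, card_erase_of_mem (mem_univ _), card_univ]
    omega
  have hcx : c x ∈ Q.image c := by
    rw [hQi]
    refine mem_erase.2 ⟨fun h => hc ?_, mem_univ _⟩
    rw [image_insert, hQi, h, insert_erase (mem_univ _)]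
  obtain ⟨x', hx', hxx⟩ := mem_image.1 hcx
  have hne : x' ≠ x := fun h => hx (h ▸ hx')
  have hS2 : S = {Q, (insert x Q).erase x'} := by
    ext Q'
    simp only [mem_insert, mem_singleton]
    constructor
    · intro h
      simp only [hS, mem_filter, mem_univ, true_and] at h
      obtain ⟨h1, h2, h3⟩ := h
      obtain ⟨z, hz, hzP⟩ := (exists_eq_insert_iff (s := Q') (t := insert x Q)).2 ⟨h3, by omega⟩
      have hQ'e : Q' = (insert x Q).erase z := by rw [← hzP, erase_insert hz]
      by_cases hzx : z = x
      · left; rw [hQ'e, hzx, erase_insert hx]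
      right
      suffices z = x' by rw [hQ'e, this]
      have hzQ : z ∈ Q := by
        have : z ∈ insert x Q := hzP ▸ mem_insert_self _ _
        exact (mem_insert.1 this).resolve_left hzx
      have : c z ∈ Q'.image c := by
        rw [h2, ← hQi]; exact mem_image_of_mem _ hzQ
      obtain ⟨w, hw, hwz⟩ := mem_image.1 this
      have hwz' : w ≠ z := fun h => hz (h ▸ hw)
      rcases mem_insert.1 (h3 hw) with rfl | hwQ
      · exact hinj hzQ hx' (by rw [hxx, hwz])
      · exact absurd (hinj hwQ hzQ hwz) hwz'
    · rintro (rfl | rfl)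
      · exact hQ'
      · simp only [hS, mem_filter, mem_univ, true_and]
        refine ⟨?_, ?_, erase_subset _ _⟩
        · rw [card_erase_of_mem (mem_insert_of_mem hx'), hP]; omega
        · rw [← hQi]
          ext k
          simp only [mem_image, mem_erase, mem_insert]
          constructor
          · rintro ⟨y, ⟨h1, rfl | h2⟩, rfl⟩
            · exact ⟨x', hx', hxx⟩
            · exact ⟨y, h2, rfl⟩
          · rintro ⟨y, h2, rfl⟩
            by_cases hy : y = x'
            · exact ⟨x, ⟨hne.symm, Or.inl rfl⟩, by rw [hy, hxx]⟩
            · exact ⟨y, ⟨hy, Or.inr h2⟩, rfl⟩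
  rw [hS2, card_pair]
  · exact even_two
  · intro h
    have : x' ∈ (insert x Q).erase x' := h ▸ hx'
    simp at this

/-- Scarf's theorem: there is a dominant set on which every colour occurs. -/
theorem exists_colourful_room {r : I → Y → ℕ} (hr : ∀ i, Function.Injective (r i)) {s : I → Y}
    (hs1 : ∀ i y, r i (s i) ≤ r i y)
    (hs2 : ∀ i j, j ≠ i → ∀ y, (∀ k, s k ≠ y) → r i y < r i (s j))
    (hY : ∃ y, ∀ k, s k ≠ y) (i₀ : I) (c : Y → I) (hcs : ∀ i, c (s i) = i) :
    ∃ P : Finset Y, Dom r P ∧ P.image c = univ := by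
  classical
  by_contra hno
  push Not at hno
  set Q₀ := (univ.erase i₀).image s with hQ₀
  let rooms : Finset (Finset Y) := univ.filter fun P => P.card = Fintype.card I ∧ Dom r P
  let doors : Finset (Finset Y) := univ.filter fun Q =>
    Q.card + 1 = Fintype.card I ∧ Q.image c = univ.erase i₀ ∧ Dom r Q
  have hpos : 0 < Fintype.card I := Fintype.card_pos_iff.2 ⟨i₀⟩
  have hsinj : Function.Injective s := fun i j h => by rw [← hcs i, ← hcs j, h]
  have hcount := sum_card_bipartiteAbove_eq_sum_card_bipartiteBelow (s := doors) (t := rooms)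
    (fun Q P => Q ⊆ P)
  have hR : Even (∑ P ∈ rooms, (bipartiteBelow (fun Q P => Q ⊆ P) doors P).card) := by
    apply even_sum
    intro P hP
    simp only [rooms, mem_filter, mem_univ, true_and] at hP
    suffices heq : bipartiteBelow (fun Q P => Q ⊆ P) doors P = univ.filter fun Q : Finset Y =>
        Q.card + 1 = Fintype.card I ∧ Q.image c = univ.erase i₀ ∧ Q ⊆ P by
      rw [heq]
      exact even_doors c i₀ hP.1 (hno P hP.2)
    ext Q
    simp only [bipartiteBelow, doors, mem_filter, mem_univ, true_and]
    constructor
    · rintro ⟨⟨h1, h2, h3⟩, h4⟩; exact ⟨h1, h2, h4⟩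
    · rintro ⟨h1, h2, h4⟩; exact ⟨⟨h1, h2, hP.2.mono h4⟩, h4⟩
  obtain ⟨a, ha, hda, hua⟩ := slack_door_one_room hr hs1 hs2 hY i₀
  rw [← hQ₀] at ha hda hua
  have hQ₀card : Q₀.card + 1 = Fintype.card I := by
    rw [hQ₀, card_image_of_injective _ hsinj, card_erase_of_mem (mem_univ _), card_univ]
    omega
  have hQ₀d : Q₀ ∈ doors := by
    simp only [doors, mem_filter, mem_univ, true_and]
    refine ⟨hQ₀card, ?_, hda.mono (subset_insert _ _)⟩
    rw [hQ₀, image_image]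
    have : c ∘ s = id := funext hcs
    rw [this, image_id]
  have hroom : ∀ Q, Q.card + 1 = Fintype.card I → ∀ P,
      P ∈ bipartiteAbove (fun Q P => Q ⊆ P) rooms Q ↔
        ∃ x, x ∉ Q ∧ Dom r (insert x Q) ∧ P = insert x Q := by
    intro Q hQ P
    simp only [bipartiteAbove, rooms, mem_filter, mem_univ, true_and]
    constructor
    · rintro ⟨⟨h1, h2⟩, h3⟩
      obtain ⟨x, hx, rfl⟩ := (exists_eq_insert_iff (s := Q) (t := P)).2 ⟨h3, by omega⟩
      exact ⟨x, hx, h2, rfl⟩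
    · rintro ⟨x, hx, h, rfl⟩
      exact ⟨⟨by rw [card_insert_of_notMem hx, hQ], h⟩, subset_insert _ _⟩
  have h1 : (bipartiteAbove (fun Q P => Q ⊆ P) rooms Q₀).card = 1 := by
    rw [card_eq_one]
    refine ⟨insert a Q₀, ?_⟩
    ext P
    rw [hroom Q₀ hQ₀card, mem_singleton]
    constructor
    · rintro ⟨x, hx, h, rfl⟩
      rw [hua x hx h]
    · rintro rfl
      exact ⟨a, ha, hda, rfl⟩
  have h2 : Even (∑ Q ∈ doors.erase Q₀, (bipartiteAbove (fun Q P => Q ⊆ P) rooms Q).card) := by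
    apply even_sum
    intro Q hQ
    obtain ⟨hne, hQ⟩ := mem_erase.1 hQ
    simp only [doors, mem_filter, mem_univ, true_and] at hQ
    obtain ⟨hQc, hQi, hQd⟩ := hQ
    -- a door of slack points is determined by its colours, hence equals `Q₀`
    have hq : ∃ q ∈ Q, ∀ k, s k ≠ q := by
      by_contra hcon
      push Not at hcon
      apply hne
      rw [hQ₀, ← hQi, image_image]
      ext y
      rw [mem_image]
      constructor
      · intro hy
        obtain ⟨k, rfl⟩ := hcon y hy
        exact ⟨s k, hy, by simp [hcs]⟩
      · rintro ⟨z, hz, rfl⟩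
        obtain ⟨k, rfl⟩ := hcon z hz
        simpa [hcs] using hz
    obtain ⟨q, hq, hqs⟩ := hq
    obtain ⟨a, b, hab, ha, hb, hda, hdb, hu⟩ := door_two_rooms hr (s := s) hQd hQc hq
      (fun i j hij => hs2 i j hij q hqs)
    have : bipartiteAbove (fun Q P => Q ⊆ P) rooms Q = {insert a Q, insert b Q} := by
      ext P
      rw [hroom Q hQc, mem_insert, mem_singleton]
      constructor
      · rintro ⟨x, hx, h, rfl⟩
        rcases hu x hx h with rfl | rfl
        · exact Or.inl rfl
        · exact Or.inr rfl
      · rintro (rfl | rfl)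
        · exact ⟨a, ha, hda, rfl⟩
        · exact ⟨b, hb, hdb, rfl⟩
    rw [this, card_pair]
    · exact even_two
    · intro h
      have : a ∈ insert b Q := h ▸ mem_insert_self a Q
      rcases mem_insert.1 this with h | h
      · exact hab h
      · exact ha h
  rw [← add_sum_erase _ _ hQ₀d, h1] at hcount
  rw [← hcount] at hR
  grind

end Scarf

/-! ### Grid points of the simplex -/

/-- A Sperner-type statement for the grid points `v` with `∑ v i = N`: for every colouring there is
a grid point `v` such that each colour `k` for which `v k` is not small occurs near `v`. -/
lemma exists_grid_point {n : ℕ} (hn : 0 < n) (N : ℕ) (c : (Fin n → ℕ) → Fin n) :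
    ∃ v : Fin n → ℕ, ∑ i, v i = N ∧ ∀ k, v k < n ∨
      ∃ w : Fin n → ℕ, ∑ i, w i = N ∧ c w = k ∧ ∀ l, w l ≤ v l + n ∧ v l ≤ w l + n := by
  classical
  let X := {v : Fin n → Fin (N + 1) // ∑ i, (v i : ℕ) = N}
  let val : X → Fin n → ℕ := fun v i => (v.1 i : ℕ)
  have hval : ∀ u : Fin n → ℕ, ∑ i, u i = N → ∃ x : X, val x = u := by
    intro u hu
    have hle : ∀ i, u i < N + 1 := fun i => by
      have := single_le_sum (f := u) (fun i _ => Nat.zero_le _) (mem_univ i)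
      omega
    exact ⟨⟨fun i => ⟨u i, hle i⟩, hu⟩, rfl⟩
  -- the levels are the coordinates shifted by one; ties are broken by an enumeration of `X ⊕ Fin n`
  let lev : Fin n → X ⊕ Fin n → ℕ := fun i y =>
    Sum.elim (fun v => val v i + 1) (fun j => if j = i then 0 else N + 2) y
  let K := Fintype.card (X ⊕ Fin n)
  let enc : X ⊕ Fin n → Fin K := Fintype.equivFin _
  let r : Fin n → X ⊕ Fin n → ℕ := fun i y => lev i y * K + enc y
  have hlt : ∀ i y z, lev i y < lev i z → r i y < r i z := by
    intro i y z h
    have h1 : (lev i y + 1) * K ≤ lev i z * K := Nat.mul_le_mul_right _ h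
    have h2 := (enc y).2
    simp only [r]
    rw [add_mul] at h1
    omega
  have hle : ∀ i y z, r i y ≤ r i z → lev i y ≤ lev i z := by
    intro i y z h
    by_contra hcon
    have := hlt i z y (not_le.1 hcon)
    omega
  have hr : ∀ i, Function.Injective (r i) := by
    intro i y z h
    have h1 := le_antisymm (hle i y z h.le) (hle i z y h.ge)
    simp only [r, h1] at h
    have : enc y = enc z := Fin.ext (by omega)
    exact (Fintype.equivFin _).injective this
  have hvN : ∀ (v : X) i, val v i ≤ N := fun v i => by have := (v.1 i).2; simp only [val]; omega
  have hs1 : ∀ i y, r i (Sum.inr i) ≤ r i y := by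
    intro i y
    by_cases h : y = Sum.inr i
    · rw [h]
    · apply (hlt i _ _ _).le
      rcases y with v | j
      · simp [lev]
      · have : j ≠ i := fun hj => h (by rw [hj])
        simp [lev, this]
  obtain ⟨x₀, hx₀⟩ := hval (Pi.single ⟨0, hn⟩ N) (by simp)
  obtain ⟨P, hP, hPc⟩ := exists_colourful_room hr (s := Sum.inr) hs1
    (by
      intro i j hij y hy
      rcases y with v | k
      · apply hlt
        have := hvN v i
        simp only [lev, Sum.elim_inl, Sum.elim_inr, hij, if_false]
        omega
      · exact absurd rfl (hy k))
    ⟨Sum.inl x₀, by simp⟩ ⟨0, hn⟩ (Sum.elim (fun v => c (val v)) id) (fun i => rfl)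
  have hcol : ∀ k, Sum.inr k ∈ P ∨ ∃ w : X, Sum.inl w ∈ P ∧ c (val w) = k := by
    intro k
    have : k ∈ P.image (Sum.elim (fun v => c (val v)) id) := hPc ▸ mem_univ k
    obtain ⟨y, hy, rfl⟩ := mem_image.1 this
    rcases y with w | j
    · exact Or.inr ⟨w, hy, rfl⟩
    · exact Or.inl hy
  have hPne : P.Nonempty := by
    rcases hcol ⟨0, hn⟩ with h | ⟨w, h, -⟩ <;> exact ⟨_, h⟩
  choose p hpP hp using fun k => exists_min_image P (r k) hPne
  let M : Fin n → ℕ := fun k => lev k (p k)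
  -- dominance: the minima `M` cannot all be exceeded by a grid point
  have hdom : ∀ v : X, ∃ k, val v k + 1 ≤ M k := by
    intro v
    obtain ⟨k, hk⟩ := hP (Sum.inl v)
    exact ⟨k, hle k _ _ (hk _ (hpP k))⟩
  have hM : ∀ v : X, Sum.inl v ∈ P → ∀ k, M k ≤ val v k + 1 := fun v hv k =>
    hle k _ _ (hp k _ hv)
  have hsum : N + 1 ≤ ∑ k, M k := by
    by_contra hcon
    obtain ⟨v, hv⟩ := hval (M + Pi.single ⟨0, hn⟩ (N - ∑ k, M k)) (by
      simp only [Pi.add_apply, sum_add_distrib, sum_pi_single', mem_univ, if_true]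
      omega)
    obtain ⟨k, hk⟩ := hdom v
    rw [hv, Pi.add_apply] at hk
    omega
  have hslack : ∀ k, Sum.inr k ∈ P → M k = 0 := by
    intro k hk
    have := hle k _ _ (hp k _ hk)
    simpa [lev] using this
  have hupper : ∀ v : X, Sum.inl v ∈ P → ∀ k, val v k + 1 ≤ M k + (n - 1) := by
    intro v hv k
    have h1 : ∑ l, (val v l + 1) = N + n := by
      rw [sum_add_distrib, show ∑ l, val v l = N from v.2]; simp
    rw [← add_sum_erase _ _ (mem_univ k)] at h1
    rw [← add_sum_erase _ _ (mem_univ k)] at hsum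
    have h2 : ∑ l ∈ univ.erase k, M l ≤ ∑ l ∈ univ.erase k, (val v l + 1) :=
      sum_le_sum fun l _ => hM v hv l
    omega
  have hex : ∃ v : X, Sum.inl v ∈ P := by
    by_contra hcon
    push Not at hcon
    have : ∑ k, M k = 0 := sum_eq_zero fun k _ => by
      rcases hcol k with h | ⟨w, h, -⟩
      · exact hslack k h
      · exact absurd h (hcon w)
    omega
  obtain ⟨v, hv⟩ := hex
  refine ⟨val v, v.2, fun k => ?_⟩
  rcases hcol k with h | ⟨w, hw, hwk⟩
  · left
    have := hupper v hv k
    rw [hslack k h] at this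
    omega
  · right
    refine ⟨val w, w.2, hwk, fun l => ?_⟩
    have := hupper v hv l
    have := hupper w hw l
    have := hM v hv l
    have := hM w hw l
    omega

/-! ### Closed covers of the simplex -/

lemma grid_mem_stdSimplex {n N : ℕ} (hN : 0 < N) {v : Fin n → ℕ} (hv : ∑ i, v i = N) :
    (fun i => (v i : ℝ) / N) ∈ stdSimplex ℝ (Fin n) := by
  refine ⟨fun i => by positivity, ?_⟩
  rw [← Finset.sum_div, ← Nat.cast_sum, hv]
  exact div_self (by positivity)

/-- If closed sets `A k` cover the simplex, then some point `x` of the simplex lies in `A k` for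
every `k` in the support of `x`. -/
theorem exists_mem_of_support {n : ℕ} (hn : 0 < n) (A : Fin n → Set (Fin n → ℝ))
    (hA : ∀ k, IsClosed (A k)) (hcov : ∀ x ∈ stdSimplex ℝ (Fin n), ∃ k, x ∈ A k) :
    ∃ x ∈ stdSimplex ℝ (Fin n), ∀ k, 0 < x k → x ∈ A k := by
  classical
  have happrox : ∀ N : ℕ, ∃ z ∈ stdSimplex ℝ (Fin n), ∀ k, (n : ℝ) / (N + 1 : ℕ) ≤ z k →
      ∃ w ∈ A k, dist w z ≤ (n : ℝ) / (N + 1 : ℕ) := by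
    intro N
    have hN : 0 < N + 1 := N.succ_pos
    have hNR : (0 : ℝ) < (N + 1 : ℕ) := by exact_mod_cast hN
    have hc : ∀ v : Fin n → ℕ, ∃ k, ∑ i, v i = N + 1 →
        (fun i => (v i : ℝ) / (N + 1 : ℕ)) ∈ A k := by
      intro v
      by_cases h : ∑ i, v i = N + 1
      · obtain ⟨k, hk⟩ := hcov _ (grid_mem_stdSimplex hN h)
        exact ⟨k, fun _ => hk⟩
      · exact ⟨⟨0, hn⟩, fun h' => absurd h' h⟩
    choose c hc using hc
    obtain ⟨v, hv, hk⟩ := exists_grid_point hn (N + 1) c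
    refine ⟨_, grid_mem_stdSimplex hN hv, fun k hz => ?_⟩
    rcases hk k with h | ⟨w, hw, rfl, hwv⟩
    · exfalso
      have h1 : (n : ℝ) ≤ v k := (div_le_div_iff_of_pos_right hNR).1 hz
      have h2 : n ≤ v k := by exact_mod_cast h1
      omega
    · refine ⟨_, hc w hw, ?_⟩
      rw [dist_pi_le_iff (by positivity)]
      intro l
      rw [Real.dist_eq, ← sub_div, abs_div, abs_of_pos hNR]
      gcongr
      rw [abs_le]
      have h1 : (w l : ℝ) ≤ v l + n := by exact_mod_cast (hwv l).1
      have h2 : (v l : ℝ) ≤ w l + n := by exact_mod_cast (hwv l).2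
      constructor <;> linarith
  choose z hz hzA using happrox
  obtain ⟨x, hx, φ, hφ, hlim⟩ := (isCompact_stdSimplex ℝ (Fin n)).tendsto_subseq hz
  refine ⟨x, hx, fun k hk => ?_⟩
  have h0 : Filter.Tendsto (fun N : ℕ => (n : ℝ) / (φ N + 1 : ℕ)) Filter.atTop (nhds 0) :=
    ((tendsto_const_div_atTop_nhds_zero_nat (n : ℝ)).comp (Filter.tendsto_add_atTop_nat 1)).comp
      hφ.tendsto_atTop
  have hzk : Filter.Tendsto (fun N => z (φ N) k) Filter.atTop (nhds (x k)) :=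
    ((continuous_apply k).tendsto x).comp hlim
  have hev : ∀ᶠ N in Filter.atTop, (n : ℝ) / (φ N + 1 : ℕ) < z (φ N) k :=
    h0.eventually_lt hzk hk
  rw [← (hA k).closure_eq, Metric.mem_closure_iff]
  intro ε hε
  have h1 : ∀ᶠ N in Filter.atTop, (n : ℝ) / (φ N + 1 : ℕ) < ε / 2 :=
    h0.eventually_lt_const (by positivity)
  have h2 : ∀ᶠ N in Filter.atTop, dist (z (φ N)) x < ε / 2 :=
    (Metric.tendsto_nhds.1 hlim) _ (by positivity)
  obtain ⟨N, hN, hN1, hN2⟩ := (hev.and (h1.and h2)).exists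
  obtain ⟨w, hw, hwd⟩ := hzA (φ N) k hN.le
  refine ⟨w, hw, ?_⟩
  have := dist_triangle w (z (φ N)) x
  rw [dist_comm x w]
  linarith

end OpenKKM

/-- Open KKM Lemma: if `F 1, …, F n` are relatively open subsets of the standard
simplex `Δₙ` such that every face `S(e_{i₁}, …, e_{i_p})` is contained in
`F i₁ ∪ ⋯ ∪ F i_p`, then `F 1 ∩ ⋯ ∩ F n` is nonempty. -/
theorem open_KKM_lemma (n : ℕ) (hn : 0 < n) (F : Fin n → Set (Fin n → ℝ))
    (hsub : ∀ i, F i ⊆ stdSimplex ℝ (Fin n))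
    (hopen : ∀ i, ∃ U : Set (Fin n → ℝ), IsOpen U ∧ F i = U ∩ stdSimplex ℝ (Fin n))
    (hface : ∀ I : Finset (Fin n), I.Nonempty →
      {x ∈ stdSimplex ℝ (Fin n) | ∀ j ∉ I, x j = 0} ⊆ ⋃ i ∈ I, F i) :
    (⋂ i, F i).Nonempty := by
  choose U hU hFU using hopen
  -- the point `0`, outside the simplex, makes the closed set `K i` nonempty even if `F i` is
  -- everything, so that `Metric.infDist` does not take its junk value
  let K : Fin n → Set (Fin n → ℝ) := fun i => (U i)ᶜ ∪ {0}
  have hK : ∀ i, IsClosed (K i) := fun i => (hU i).isClosed_compl.union isClosed_singleton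
  have hKne : ∀ i, (K i).Nonempty := fun i => ⟨0, Or.inr rfl⟩
  let δ : Fin n → (Fin n → ℝ) → ℝ := fun i x => Metric.infDist x (K i)
  have hδc : ∀ i, Continuous (δ i) := fun i => Metric.continuous_infDist_pt _
  have hδ0 : ∀ i x, 0 ≤ δ i x := fun i x => Metric.infDist_nonneg
  have hδF : ∀ i, ∀ x ∈ stdSimplex ℝ (Fin n), (x ∈ F i ↔ 0 < δ i x) := by
    intro i x hx
    have hx0 : x ≠ 0 := by
      rintro rfl
      have := hx.2
      simp at this
    rw [← (hK i).notMem_iff_infDist_pos (hKne i), hFU i]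
    simp [K, hx, hx0]
  let M : (Fin n → ℝ) → ℝ := fun x => ∑ i, x i * δ i x
  have hMpos : ∀ x ∈ stdSimplex ℝ (Fin n), 0 < M x := by
    intro x hx
    have hne : (Finset.univ.filter fun i => x i ≠ 0).Nonempty := by
      by_contra h
      rw [Finset.not_nonempty_iff_eq_empty, Finset.filter_eq_empty_iff] at h
      have h1 : ∑ i, x i = 0 := Finset.sum_eq_zero fun i hi => by simpa using h hi
      have := hx.2
      linarith
    have hmem := hface _ hne ⟨hx, fun j hj => by simpa using hj⟩
    simp only [Set.mem_iUnion, Finset.mem_filter, Finset.mem_univ, true_and] at hmem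
    obtain ⟨i, hi, hxi⟩ := hmem
    exact Finset.sum_pos' (fun j _ => mul_nonneg (hx.1 j) (hδ0 j x))
      ⟨i, Finset.mem_univ i, mul_pos (lt_of_le_of_ne (hx.1 i) hi.symm) ((hδF i x hx).1 hxi)⟩
  have hMc : Continuous M :=
    continuous_finsetSum _ fun i _ => (continuous_apply i).mul (hδc i)
  let e : Fin n → (Fin n → ℝ) → ℝ := fun i x => max 0 (M x - δ i x)
  have hec : ∀ i, Continuous (e i) := fun i => continuous_const.max (hMc.sub (hδc i))
  have he0 : ∀ i x, 0 ≤ e i x := fun i x => le_max_left _ _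
  let E : (Fin n → ℝ) → ℝ := fun x => ∑ i, e i x
  have hEc : Continuous E := continuous_finsetSum _ fun i _ => hec i
  obtain ⟨x, hx, hxA⟩ := OpenKKM.exists_mem_of_support hn (fun k => {x | x k * E x ≤ e k x})
    (fun k => isClosed_le ((continuous_apply k).mul hEc) (hec k)) (by
      intro x hx
      by_contra hcon
      simp only [Set.mem_ofPred_eq, not_exists, not_le] at hcon
      have : ∑ k, e k x < ∑ k, x k * E x :=
        Finset.sum_lt_sum_of_nonempty ⟨⟨0, hn⟩, Finset.mem_univ _⟩ fun k _ => hcon k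
      rw [← Finset.sum_mul, hx.2, one_mul] at this
      exact lt_irrefl _ this)
  have hle : ∀ k, x k * E x ≤ e k x := by
    intro k
    rcases (hx.1 k).lt_or_eq with h | h
    · exact hxA k h
    · rw [← h, zero_mul]; exact he0 k x
  have hE0 : E x ≤ 0 := by
    by_contra hE
    rw [not_le] at hE
    have hδM : ∀ i, 0 < x i → δ i x < M x := by
      intro i hi
      have h1 : 0 < e i x := (mul_pos hi hE).trans_le (hle i)
      rcases lt_max_iff.1 h1 with h | h
      · exact absurd h (lt_irrefl _)
      · linarith
    have : ∑ i, x i * δ i x < ∑ i, x i * M x := by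
      apply Finset.sum_lt_sum
      · intro i _
        rcases (hx.1 i).lt_or_eq with h | h
        · exact mul_le_mul_of_nonneg_left (hδM i h).le h.le
        · simp [← h]
      · by_contra hcon
        push Not at hcon
        have h1 : ∑ i, x i ≤ 0 := Finset.sum_nonpos fun i hi => by
          by_contra h
          rw [not_le] at h
          exact absurd (hcon i hi) (not_le.2 (mul_lt_mul_of_pos_left (hδM i h) h))
        have := hx.2
        linarith
    rw [← Finset.sum_mul, hx.2, one_mul] at this
    exact lt_irrefl _ this
  refine ⟨x, Set.mem_iInter.2 fun i => (hδF i x hx).2 ?_⟩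
  have h1 : e i x ≤ E x :=
    Finset.single_le_sum (f := fun i => e i x) (fun j _ => he0 j x) (Finset.mem_univ i)
  have h2 : M x - δ i x ≤ e i x := le_max_right _ _
  have := hMpos x hx
  linarith
end

section
/- Let h : ℝⁿ₊ → ℝⁿ be continuous. Assume hᵢ(x) ≥ 0 for every x ∈ ℝⁿ₊ with xᵢ = 0, and assume there exists no x ∈ ℝⁿ₊ with x ≠ 0 and h(x) ≥ 0. Then there exists v in the standard simplex Δₙ with h(v) ≪ 0, i.e. hᵢ(v) < 0 for all i = 1, …, n. -/
/-!
Let `q x i = max 0 (-h x i)`. On the simplex `q x ≠ 0`, because `h x ≥ 0` fails, so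
`x ↦ q x / ∑ j, q x j` is a continuous self-map of the simplex. Composing it with the cyclic shift of
coordinates and applying Brouwer's fixed point theorem yields `v` with `v i` proportional to
`q v (i + 1)`. If `v i > 0` then `q v (i + 1) > 0`, that is `h v (i + 1) < 0`, and the boundary
condition gives `v (i + 1) > 0`. Going around the cycle, `h v i < 0` for every `i`.

Brouwer's theorem on the simplex (`exists_fixed_point_stdSimplex`) is derived from Scarf's lemma
(`exists_colorful_dominating`) on finite sets with several linear orders, applied to the grid points
of the simplex ordered by each coordinate (`exists_grid_point`). Scarf's lemma itself combines the
pivoting rule for dominating sets (`exists_two_pivots`) with Sperner's parity argument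
(`even_card_colorful`).
-/

/-! ### Scarf's lemma -/

/-- `r i` ranks the vertices in the `i`-th of a family of linear orders. `S` is dominating if no
vertex lies strictly above the `r i`-minimum of `S` simultaneously for all `i`. -/
def Dominates {V I : Type*} (r : I → V → ℕ) (S : Finset V) : Prop :=
  ∀ y, ∃ i, ∀ x ∈ S, r i y ≤ r i x

/-- A dominating set `S` with one element fewer than there are orders extends to a larger dominating
set in exactly two ways. Every element of `S` is its minimum for some order, so exactly two orders
`i ≠ j` share a minimum. For `k ∈ {i, j}`, the new vertex is the `r k`-largest one among those above
the minimum of `S` in every order except `k`; `hM` says that such vertices exist. -/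
theorem exists_two_pivots {V I : Type*} [Fintype V] [DecidableEq V] [Fintype I] [DecidableEq I]
    (r : I → V → ℕ) (hr : ∀ i, Function.Injective (r i)) (S : Finset V) (hS : S.Nonempty)
    (hcard : S.card + 1 = Fintype.card I) (hdom : Dominates r S)
    (hM : ∀ k, ∃ y, ∀ l, l ≠ k → ∃ z ∈ S, r l z < r l y) :
    ∃ a b, a ≠ b ∧ ∀ x, (x ∉ S ∧ Dominates r (insert x S)) ↔ x = a ∨ x = b := by
  classical
  choose m hmS hmin using fun l : I => S.exists_min_image (r l) hS
  have hm_eq : ∀ l, ∀ z ∈ S, (∀ x ∈ S, r l z ≤ r l x) → m l = z := fun l z hz h =>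
    hr l (le_antisymm (hmin l z hz) (h _ (hmS l)))
  have hsub : ∀ A : Finset I, S ⊆ A.image m → S.card ≤ A.card := fun A hA =>
    (Finset.card_le_card hA).trans Finset.card_image_le
  have hsurj : ∀ z ∈ S, ∃ l, m l = z := fun z hz => by
    obtain ⟨l, hl⟩ := hdom z
    exact ⟨l, hm_eq l z hz hl⟩
  obtain ⟨i, j, hij, hmij⟩ : ∃ i j, i ≠ j ∧ m i = m j := by
    obtain ⟨i, -, j, -, h1, h2⟩ := Finset.exists_ne_map_eq_of_card_lt_of_maps_to
      (s := Finset.univ) (t := S) (f := m) (by rw [Finset.card_univ]; omega) (fun l _ => hmS l)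
    exact ⟨i, j, h1, h2⟩
  -- `M k` holds the vertices beating `S` in all orders but `k`, and `P k` singles out its `k`-maximum
  let M : I → V → Prop := fun k y => ∀ l, l ≠ k → r l (m l) < r l y
  have hMk : ∀ k y, M k y → ∀ z ∈ S, r k y ≤ r k z := by
    intro k y hy
    obtain ⟨l, hl⟩ := hdom y
    by_cases hlk : l = k
    · exact hlk ▸ hl
    · exact absurd (hl _ (hmS l)) (not_le.2 (hy l hlk))
  let P : I → V → Prop := fun k x => M k x ∧ ∀ y, M k y → r k y ≤ r k x
  have hPex : ∀ k, ∃ x, P k x := by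
    intro k
    obtain ⟨y, hy⟩ := hM k
    have hy' : M k y := fun l hl => by
      obtain ⟨z, hz, h⟩ := hy l hl
      exact (hmin l z hz).trans_lt h
    obtain ⟨x, hx, hx'⟩ := (Finset.univ.filter (M k)).exists_max_image (r k) ⟨y, by simpa using hy'⟩
    exact ⟨x, by simpa using hx, fun y hy => hx' y (by simpa using hy)⟩
  have hPuniq : ∀ k x x', P k x → P k x' → x = x' := fun k x x' h h' =>
    hr k (le_antisymm (h'.2 _ h.1) (h.2 _ h'.1))
  have hback : ∀ k, (k = i ∨ k = j) → ∀ x, P k x → x ∉ S ∧ Dominates r (insert x S) := by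
    intro k hk x hx
    constructor
    · intro hxS
      obtain ⟨l, hl⟩ := hsurj x hxS
      have hlk : l = k := by
        by_contra h
        have := hx.1 l h
        rw [hl] at this
        exact lt_irrefl _ this
      subst hlk
      rcases hk with rfl | rfl
      · have := hx.1 j hij.symm
        rw [← hmij, hl] at this
        exact lt_irrefl _ this
      · have := hx.1 i hij
        rw [hmij, hl] at this
        exact lt_irrefl _ this
    · intro y
      by_cases hy : M k y
      · refine ⟨k, fun z hz => ?_⟩
        rcases Finset.mem_insert.1 hz with rfl | hz
        · exact hx.2 y hy
        · exact hMk k y hy z hz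
      · obtain ⟨l, hlk, hl⟩ : ∃ l, l ≠ k ∧ r l y ≤ r l (m l) := by
          simpa only [M, not_forall, not_lt, exists_prop] using hy
        refine ⟨l, fun z hz => ?_⟩
        rcases Finset.mem_insert.1 hz with rfl | hz
        · exact hl.trans (hx.1 l hlk).le
        · exact hl.trans (hmin l z hz)
  have hforw : ∀ x, x ∉ S → Dominates r (insert x S) → ∃ k, (k = i ∨ k = j) ∧ P k x := by
    intro x hxS hx
    obtain ⟨k, hk⟩ := hx x
    -- each element of `S` needs an order in which it is minimal in `insert x S`, so `x` can be minimal
    -- only for `k`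
    have hcov : ∀ l, (∀ z ∈ S, r l x ≤ r l z) → S ⊆ ((Finset.univ.erase k).erase l).image m := by
      intro l hl z hz
      obtain ⟨t, ht⟩ := hx z
      have hzx : z ≠ x := fun h => hxS (h ▸ hz)
      have htx := ht x (Finset.mem_insert_self _ _)
      simp only [Finset.mem_image, Finset.mem_erase, Finset.mem_univ, and_true]
      refine ⟨t, ⟨?_, ?_⟩, hm_eq t z hz fun y hy => ht y (Finset.mem_insert_of_mem hy)⟩
      · rintro rfl
        exact hzx (hr t (le_antisymm htx (hl z hz)))
      · rintro rfl
        exact hzx (hr t (le_antisymm htx (hk z (Finset.mem_insert_of_mem hz))))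
    have hkS : ∀ z ∈ S, r k x ≤ r k z := fun z hz => hk z (Finset.mem_insert_of_mem hz)
    refine ⟨k, ?_, ?_, ?_⟩
    · by_contra! hcon
      have h1 := hcov k hkS
      have h2 : S ⊆ ((Finset.univ.erase k).erase i).image m := by
        intro z hz
        obtain ⟨t, ht, rfl⟩ := Finset.mem_image.1 (h1 hz)
        simp only [Finset.mem_image, Finset.mem_erase, Finset.mem_univ, and_true] at ht ⊢
        by_cases hti : t = i
        · exact ⟨j, ⟨hij.symm, hcon.2.symm⟩, by rw [hti, hmij]⟩
        · exact ⟨t, ⟨hti, ht.1⟩, rfl⟩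
      have h3 := hsub _ h2
      rw [Finset.card_erase_of_mem (by simp [hcon.1.symm]), Finset.card_erase_of_mem (by simp),
        Finset.card_univ] at h3
      have := hS.card_pos
      omega
    · intro l hlk
      by_contra! hcon
      have h3 := hsub _ (hcov l fun z hz => hcon.trans (hmin l z hz))
      rw [Finset.card_erase_of_mem (by simp [hlk]), Finset.card_erase_of_mem (by simp),
        Finset.card_univ] at h3
      have := hS.card_pos
      omega
    · intro y hy
      obtain ⟨l, hl⟩ := hx y
      by_cases hlk : l = k
      · exact hlk ▸ hl x (Finset.mem_insert_self _ _)
      · exact absurd (hl _ (Finset.mem_insert_of_mem (hmS l))) (not_le.2 (hy l hlk))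
  obtain ⟨a, ha⟩ := hPex i
  obtain ⟨b, hb⟩ := hPex j
  refine ⟨a, b, ?_, fun x => ⟨?_, ?_⟩⟩
  · rintro rfl
    obtain ⟨l, hl⟩ := hdom a
    have := hl _ (hmS l)
    by_cases hli : l = i
    · exact absurd this (not_le.2 (hb.1 l (hli ▸ hij)))
    · exact absurd this (not_le.2 (ha.1 l hli))
  · rintro ⟨hxS, hx⟩
    obtain ⟨k, rfl | rfl, hk⟩ := hforw x hxS hx
    · exact Or.inl (hPuniq _ _ _ hk ha)
    · exact Or.inr (hPuniq _ _ _ hk hb)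
  · rintro (rfl | rfl)
    · exact hback i (Or.inl rfl) _ ha
    · exact hback j (Or.inr rfl) _ hb

/-- Sperner's parity argument: in a pure complex whose facets (the members of `K`) have `|I|` vertices
and in which every ridge lies in exactly two facets, the number of facets carrying all colours is
even. -/
theorem even_card_colorful {V I : Type*} [DecidableEq V] [Fintype I] [DecidableEq I]
    [Nonempty I] (K : Finset (Finset V)) (hK : ∀ S ∈ K, S.card = Fintype.card I)
    (hpiv : ∀ S ∈ K, ∀ v ∈ S, ∃ a b, a ≠ b ∧
      ∀ x, (x ∉ S.erase v ∧ insert x (S.erase v) ∈ K) ↔ x = a ∨ x = b) (c : V → I) :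
    Even (K.filter fun S => S.image c = Finset.univ).card := by
  classical
  obtain ⟨i₀⟩ := ‹Nonempty I›
  -- the vertices of `S` opposite to a door, i.e. a ridge carrying all colours but `i₀`
  let D : Finset V → Finset V := fun S =>
    S.filter fun v => (S.erase v).image c = Finset.univ.erase i₀
  -- a colourful facet has one door, every other facet has none or two
  have hD : ∀ S ∈ K, (((D S).card : ℕ) : ZMod 2) = if S.image c = Finset.univ then 1 else 0 := by
    intro S hS
    have hinj : ∀ v ∈ D S, Set.InjOn c (S.erase v : Finset V) := by
      intro v hv
      obtain ⟨hvS, hv⟩ := Finset.mem_filter.1 hv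
      apply Finset.injOn_of_card_image_eq
      rw [hv, Finset.card_erase_of_mem hvS, hK S hS, Finset.card_erase_of_mem (Finset.mem_univ _),
        Finset.card_univ]
    split_ifs with hcol
    · have hSinj : Set.InjOn c (S : Set V) := by
        apply Finset.injOn_of_card_image_eq
        rw [hcol, hK S hS, Finset.card_univ]
      obtain ⟨v, hvS, hv⟩ : ∃ v ∈ S, c v = i₀ := by
        have := Finset.mem_univ i₀
        rw [← hcol] at this
        simpa using this
      have : D S = {v} := by
        ext w
        simp only [D, Finset.mem_filter, Finset.mem_singleton]
        constructor
        · rintro ⟨hw, hw'⟩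
          by_contra hne
          have : c v ∈ (S.erase w).image c :=
            Finset.mem_image_of_mem _ (Finset.mem_erase.2 ⟨fun h => hne h.symm, hvS⟩)
          rw [hw', hv] at this
          simp at this
        · rintro rfl
          refine ⟨hvS, ?_⟩
          ext i
          simp only [Finset.mem_image, Finset.mem_erase, Finset.mem_univ, and_true]
          constructor
          · rintro ⟨x, ⟨hxv, hxS⟩, rfl⟩ h
            exact hxv (hSinj hxS hvS (h.trans hv.symm))
          · intro hi
            have := Finset.mem_univ i
            rw [← hcol] at this
            obtain ⟨x, hxS, rfl⟩ := Finset.mem_image.1 this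
            exact ⟨x, ⟨fun h => hi (h ▸ hv), hxS⟩, rfl⟩
      rw [this]; simp
    · rcases (D S).eq_empty_or_nonempty with h0 | ⟨v, hvD⟩
      · rw [h0]; simp
      · have hi := hinj v hvD
        have hc0 : ∀ w ∈ D S, c w ≠ i₀ := by
          intro w hw h
          obtain ⟨hwS, hw⟩ := Finset.mem_filter.1 hw
          apply hcol
          rw [← Finset.insert_erase hwS, Finset.image_insert, hw, h]
          simp
        have hex : ∀ w ∈ D S, ∃ w' ∈ S, w' ≠ w ∧ c w' = c w := by
          intro w hw
          have h := hc0 w hw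
          obtain ⟨hwS, hw⟩ := Finset.mem_filter.1 hw
          have : c w ∈ (S.erase w).image c := by rw [hw]; simp [h]
          obtain ⟨w', hw', h'⟩ := Finset.mem_image.1 this
          exact ⟨w', Finset.mem_of_mem_erase hw', Finset.ne_of_mem_erase hw', h'⟩
        obtain ⟨v', hv'S, hne, hcv⟩ := hex v hvD
        have hvS := (Finset.mem_filter.1 hvD).1
        have hvE := (Finset.mem_filter.1 hvD).2
        have : D S = {v, v'} := by
          ext w
          simp only [Finset.mem_insert, Finset.mem_singleton]
          constructor
          · intro hw
            obtain ⟨w', hw'S, hw'ne, hcw⟩ := hex w hw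
            have hwS := (Finset.mem_filter.1 hw).1
            by_contra! hcon
            by_cases hw'v : w' = v
            · exact hcon.2 (hi (by simp [hcon.1, hwS]) (by simp [hne, hv'S])
                (by rw [← hcw, hw'v, hcv]))
            · exact hw'ne (hi (by simp [hw'v, hw'S]) (by simp [hcon.1, hwS]) hcw)
          · rintro (rfl | rfl)
            · exact hvD
            · refine Finset.mem_filter.2 ⟨hv'S, ?_⟩
              rw [← hvE]
              ext i
              simp only [Finset.mem_image, Finset.mem_erase]
              constructor
              · rintro ⟨x, ⟨hx, hxS⟩, rfl⟩
                by_cases hxv : x = v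
                · exact ⟨w, ⟨hne, hv'S⟩, by rw [hcv, hxv]⟩
                · exact ⟨x, ⟨hxv, hxS⟩, rfl⟩
              · rintro ⟨x, ⟨hx, hxS⟩, rfl⟩
                by_cases hxv : x = w
                · exact ⟨v, ⟨hne.symm, hvS⟩, by rw [← hcv, hxv]⟩
                · exact ⟨x, ⟨hxv, hxS⟩, rfl⟩
        rw [this, Finset.card_pair hne.symm]
        rfl
  -- passing to the other facet at a door gives a fixed-point-free involution on incident pairs
  have hother : ∀ p : (_ : Finset V) × V, ∃ x, p ∈ K.sigma D → x ≠ p.2 ∧ x ∉ p.1.erase p.2 ∧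
      insert x (p.1.erase p.2) ∈ K ∧ ∀ y, y ≠ p.2 → y ∉ p.1.erase p.2 →
        insert y (p.1.erase p.2) ∈ K → y = x := by
    rintro ⟨S, v⟩
    by_cases hp : (⟨S, v⟩ : (_ : Finset V) × V) ∈ K.sigma D
    · obtain ⟨hS, hv⟩ := Finset.mem_sigma.1 hp
      have hvS : v ∈ S := (Finset.mem_filter.1 hv).1
      obtain ⟨a, b, hab, h⟩ := hpiv S hS v hvS
      have hvv := (h v).1 ⟨by simp, by rw [Finset.insert_erase hvS]; exact hS⟩
      have ha := (h a).2 (Or.inl rfl)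
      have hb := (h b).2 (Or.inr rfl)
      rcases hvv with rfl | rfl
      · refine ⟨b, fun _ => ⟨hab.symm, hb.1, hb.2, fun y hy h1 h2 => ?_⟩⟩
        exact ((h y).1 ⟨h1, h2⟩).resolve_left hy
      · refine ⟨a, fun _ => ⟨hab, ha.1, ha.2, fun y hy h1 h2 => ?_⟩⟩
        exact ((h y).1 ⟨h1, h2⟩).resolve_right hy
    · exact ⟨v, fun h => absurd h hp⟩
  choose g hg using hother
  let φ : (_ : Finset V) × V → (_ : Finset V) × V := fun p => ⟨insert (g p) (p.1.erase p.2), g p⟩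
  have hφ : ∀ p ∈ K.sigma D, φ p ∈ K.sigma D := by
    intro p hp
    obtain ⟨-, h1, h2, -⟩ := hg p hp
    refine Finset.mem_sigma.2 ⟨h2, Finset.mem_filter.2 ⟨Finset.mem_insert_self _ _, ?_⟩⟩
    change ((insert (g p) (p.1.erase p.2)).erase (g p)).image c = _
    rw [Finset.erase_insert h1]
    exact (Finset.mem_filter.1 (Finset.mem_sigma.1 hp).2).2
  have hsum : ∑ _p ∈ K.sigma D, (1 : ZMod 2) = 0 := by
    refine Finset.sum_involution (fun p _ => φ p) (fun _ _ => by decide) ?_ hφ ?_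
    · intro p hp _ h
      exact (hg p hp).1 (congrArg Sigma.snd h)
    · intro p hp
      obtain ⟨hne, h1, h2, -⟩ := hg p hp
      obtain ⟨-, -, -, h3⟩ := hg _ (hφ p hp)
      have he : (φ p).1.erase (φ p).2 = p.1.erase p.2 := Finset.erase_insert h1
      have hpS : p.2 ∈ p.1 := (Finset.mem_filter.1 (Finset.mem_sigma.1 hp).2).1
      have hgp : p.2 = g (φ p) := by
        apply h3 p.2 hne.symm
        · rw [he]; simp
        · rw [he, Finset.insert_erase hpS]; exact (Finset.mem_sigma.1 hp).1
      have : φ (φ p) = ⟨insert p.2 (p.1.erase p.2), p.2⟩ := by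
        change (⟨insert (g (φ p)) ((φ p).1.erase (φ p).2), g (φ p)⟩ : (_ : Finset V) × V) = _
        rw [he, ← hgp]
      rw [this, Finset.insert_erase hpS]
  rw [Finset.sum_const, Finset.card_sigma, nsmul_one, Nat.cast_sum, Finset.sum_congr rfl hD,
    ← Finset.sum_filter, Finset.sum_const, nsmul_one] at hsum
  exact (ZMod.natCast_eq_zero_iff_even).1 hsum

/-- Scarf's lemma. The slack vertices `s i` are lowest in order `i` and above all non-slack vertices in
the other orders. The dominating sets of size `|I|`, completed by the set of all slack vertices, are
the facets of a complex without boundary. The set of all slack vertices is colourful, so by parity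
there is a second colourful facet, and it is dominating. -/
theorem exists_colorful_dominating {V I : Type*} [Fintype V] [DecidableEq V] [Fintype I]
    [DecidableEq I] [Nonempty I] (r : I → V → ℕ) (hr : ∀ i, Function.Injective (r i))
    (s : I → V) (hs : Function.Injective s) (hs0 : ∀ i v, r i (s i) ≤ r i v)
    (hs1 : ∀ v, v ∉ Set.range s → ∀ l k, l ≠ k → r l v < r l (s k))
    (hT : ∃ t, t ∉ Set.range s) (c : V → I) (hc : ∀ i, c (s i) = i) :
    ∃ S : Finset V, Dominates r S ∧ S.image c = Finset.univ ∧ ∃ t ∈ S, t ∉ Set.range s := by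
  classical
  let Z : Finset V := Finset.univ.image s
  have hZ : ∀ v, v ∈ Z ↔ v ∈ Set.range s := by simp [Z]
  have hZcard : Z.card = Fintype.card I := by
    rw [Finset.card_image_of_injective _ hs, Finset.card_univ]
  let K : Finset (Finset V) := Finset.univ.filter fun S =>
    S.card = Fintype.card I ∧ (Dominates r S ∨ S = Z)
  have hKmem : ∀ S, S ∈ K ↔ S.card = Fintype.card I ∧ (Dominates r S ∨ S = Z) := by simp [K]
  have hpiv : ∀ S ∈ K, ∀ v ∈ S, ∃ a b, a ≠ b ∧
      ∀ x, (x ∉ S.erase v ∧ insert x (S.erase v) ∈ K) ↔ x = a ∨ x = b := by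
    intro S hS v hv
    obtain ⟨hScard, hSd⟩ := (hKmem S).1 hS
    have hEcard : (S.erase v).card + 1 = Fintype.card I := by
      rw [Finset.card_erase_add_one hv, hScard]
    by_cases hslack : ∃ t ∈ S.erase v, t ∉ Set.range s
    · obtain ⟨t, ht, hts⟩ := hslack
      have hd : Dominates r S := by
        refine hSd.resolve_right fun h => hts ((hZ t).1 ?_)
        rw [← h]; exact Finset.mem_of_mem_erase ht
      have hd' : Dominates r (S.erase v) := fun y => by
        obtain ⟨i, hi⟩ := hd y
        exact ⟨i, fun x hx => hi x (Finset.mem_of_mem_erase hx)⟩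
      obtain ⟨a, b, hab, h⟩ := exists_two_pivots r hr (S.erase v) ⟨t, ht⟩ hEcard hd'
        fun k => ⟨s k, fun l hl => ⟨t, ht, hs1 t hts l k hl⟩⟩
      refine ⟨a, b, hab, fun x => ?_⟩
      rw [← h x, hKmem]
      refine and_congr_right fun hx => ?_
      rw [Finset.card_insert_of_notMem hx]
      constructor
      · rintro ⟨-, h | h⟩
        · exact h
        · exact absurd ((hZ t).1 (h ▸ Finset.mem_insert_of_mem ht)) hts
      · exact fun h => ⟨hEcard, Or.inl h⟩
    · push Not at hslack
      -- a ridge consisting of slack vertices misses exactly one of them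
      obtain ⟨k, hk⟩ : ∃ k, ∀ x, x ∈ S.erase v ↔ ∃ j, j ≠ k ∧ s j = x := by
        let A : Finset I := Finset.univ.filter fun j => s j ∈ S.erase v
        have hA : A.image s = S.erase v := by
          ext x
          simp only [A, Finset.mem_image, Finset.mem_filter, Finset.mem_univ, true_and]
          constructor
          · rintro ⟨j, hj, rfl⟩; exact hj
          · intro hx
            obtain ⟨j, rfl⟩ := hslack x hx
            exact ⟨j, hx, rfl⟩
        have hAcard : Aᶜ.card = 1 := by
          rw [Finset.card_compl, ← Finset.card_image_of_injective A hs, hA]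
          omega
        obtain ⟨k, hk⟩ := Finset.card_eq_one.1 hAcard
        refine ⟨k, fun x => ?_⟩
        have hAk : ∀ j, j ∈ A ↔ j ≠ k := fun j => by
          rw [← not_iff_not, ← Finset.mem_compl, hk]; simp
        rw [← hA]
        simp [hAk]
      obtain ⟨t, ht⟩ := hT
      obtain ⟨b, hb, hbmax⟩ := (Finset.univ.filter fun t => t ∉ Set.range s).exists_max_image (r k)
        ⟨t, by simpa using ht⟩
      have hb' : b ∉ Set.range s := (Finset.mem_filter.1 hb).2
      have hbmax' : ∀ y, y ∉ Set.range s → r k y ≤ r k b := fun y hy =>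
        hbmax y (Finset.mem_filter.2 ⟨Finset.mem_univ _, hy⟩)
      refine ⟨s k, b, fun h => hb' ⟨k, h⟩, fun x => ?_⟩
      rw [hKmem]
      constructor
      · rintro ⟨hx, -, hx'⟩
        by_cases hxs : x ∈ Set.range s
        · obtain ⟨j, rfl⟩ := hxs
          left
          by_contra hne
          exact hx ((hk _).2 ⟨j, fun h => hne (by rw [h]), rfl⟩)
        · right
          have hd : Dominates r (insert x (S.erase v)) := by
            refine hx'.resolve_right fun h => hxs ((hZ x).1 ?_)
            rw [← h]; exact Finset.mem_insert_self _ _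
          obtain ⟨l, hl⟩ := hd b
          by_cases hlk : l = k
          · subst hlk
            exact hr l (le_antisymm (hbmax' x hxs) (hl x (Finset.mem_insert_self _ _)))
          · have := hl (s l) (Finset.mem_insert_of_mem ((hk _).2 ⟨l, hlk, rfl⟩))
            exact absurd ⟨l, hr l (le_antisymm (hs0 l b) this)⟩ hb'
      · rintro (rfl | rfl)
        · have hx : s k ∉ S.erase v := by
            rw [hk]; rintro ⟨j, hj, h⟩; exact hj (hs h)
          refine ⟨hx, by rw [Finset.card_insert_of_notMem hx, hEcard], Or.inr ?_⟩
          ext y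
          rw [Finset.mem_insert, hk, hZ]
          constructor
          · rintro (rfl | ⟨j, -, rfl⟩)
            · exact ⟨k, rfl⟩
            · exact ⟨j, rfl⟩
          · rintro ⟨j, rfl⟩
            by_cases hj : j = k
            · left; rw [hj]
            · exact Or.inr ⟨j, hj, rfl⟩
        · have hx : x ∉ S.erase v := fun h => hb' (hslack x h)
          refine ⟨hx, by rw [Finset.card_insert_of_notMem hx, hEcard], Or.inl fun y => ?_⟩
          by_cases hy : y ∈ Set.range s
          · obtain ⟨l, rfl⟩ := hy
            exact ⟨l, fun z _ => hs0 l z⟩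
          · refine ⟨k, fun z hz => ?_⟩
            rcases Finset.mem_insert.1 hz with rfl | hz
            · exact hbmax' y hy
            · obtain ⟨j, hj, rfl⟩ := (hk z).1 hz
              exact (hs1 y hy k j hj.symm).le
  have heven := even_card_colorful K (fun S hS => ((hKmem S).1 hS).1) hpiv c
  have hZmem : Z ∈ K.filter fun S => S.image c = Finset.univ := by
    refine Finset.mem_filter.2 ⟨(hKmem Z).2 ⟨hZcard, Or.inr rfl⟩, ?_⟩
    ext i
    simp only [Finset.mem_image, Finset.mem_univ, iff_true]
    exact ⟨s i, (hZ _).2 ⟨i, rfl⟩, hc i⟩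
  obtain ⟨S, hS, hSZ⟩ := Finset.exists_mem_ne (by
    have := Finset.card_pos.2 ⟨Z, hZmem⟩
    obtain ⟨q, hq⟩ := heven
    omega : 1 < (K.filter fun S => S.image c = Finset.univ).card) Z
  obtain ⟨hSK, hScol⟩ := Finset.mem_filter.1 hS
  obtain ⟨hScard, hSd⟩ := (hKmem S).1 hSK
  refine ⟨S, hSd.resolve_right hSZ, hScol, ?_⟩
  by_contra! hcon
  exact hSZ (Finset.eq_of_subset_of_card_le (fun x hx => (hZ x).2 (hcon x hx))
    (by rw [hZcard, hScard]))

/-! ### Brouwer's theorem on the simplex -/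

/-- For any colouring of the grid points `{t | ∑ tᵢ = m}` there is a grid point which, for every
colour `k`, either has `k`-th coordinate at most `|I|`, or is within `|I|` in each coordinate of a
grid point of colour `k`. -/
theorem exists_grid_point {I : Type*} [Fintype I] [DecidableEq I] [Nonempty I] (m : ℕ)
    (c : (I → ℕ) → I) :
    ∃ t : I → ℕ, ∑ i, t i = m ∧ ∀ k, t k ≤ Fintype.card I ∨
      ∃ t' : I → ℕ, ∑ i, t' i = m ∧ c t' = k ∧
        ∀ i, t i ≤ t' i + Fintype.card I ∧ t' i ≤ t i + Fintype.card I := by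
  classical
  let T := {t : I → ℕ // t ∈ Finset.piAntidiag (Finset.univ : Finset I) m}
  have hTsum : ∀ t : T, ∑ i, t.1 i = m := fun t => by
    have := t.2
    rw [Finset.mem_piAntidiag] at this
    exact this.1
  have hTmk : ∀ t : I → ℕ, ∑ i, t i = m → ∃ t' : T, t'.1 = t := fun t ht =>
    ⟨⟨t, by rw [Finset.mem_piAntidiag]; exact ⟨ht, by simp⟩⟩, rfl⟩
  have hTle : ∀ (t : T) i, t.1 i ≤ m := fun t i => by
    exact (Finset.single_le_sum (f := t.1) (fun _ _ => Nat.zero_le _) (Finset.mem_univ i)).trans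
      (hTsum t).le
  let N := Fintype.card T
  let e : T ≃ Fin N := Fintype.equivFin T
  let eI : I ≃ Fin (Fintype.card I) := Fintype.equivFin I
  -- `r i` compares the `i`-th coordinates, breaking ties by the enumeration `e`; slack vertex `i` is
  -- placed at the bottom and the other slack vertices at the top
  let r : I → T ⊕ I → ℕ := fun i => Sum.elim (fun t => 1 + (t.1 i * N + e t))
    (fun k => if k = i then 0 else 1 + ((m + 1) * N + eI k))
  have hdig : ∀ a b x y : ℕ, y < N → a * N + x ≤ b * N + y → a ≤ b := by
    intro a b x y hy h
    by_contra! hlt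
    have : (b + 1) * N ≤ a * N := Nat.mul_le_mul_right _ hlt
    rw [Nat.add_mul] at this
    omega
  have hrT : ∀ i (t t' : T), r i (Sum.inl t) ≤ r i (Sum.inl t') → t.1 i ≤ t'.1 i := by
    intro i t t' h
    exact hdig _ _ _ _ (e t').2 (Nat.le_of_add_le_add_left h)
  have hbig : ∀ i (t : T) k, k ≠ i → r i (Sum.inl t) < r i (Sum.inr k) := by
    intro i t k hk
    simp only [r, Sum.elim_inl, Sum.elim_inr, if_neg hk]
    have h1 : t.1 i * N ≤ m * N := Nat.mul_le_mul_right _ (hTle t i)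
    have h2 := (e t).2
    rw [Nat.add_mul]
    omega
  have hr0 : ∀ i, r i (Sum.inr i) = 0 := fun i => by simp [r]
  have hrpos : ∀ i x, x ≠ Sum.inr i → 0 < r i x := by
    rintro i (t | k) hx
    · simp only [r, Sum.elim_inl]; omega
    · have : k ≠ i := fun h => hx (by rw [h])
      simp only [r, Sum.elim_inr, if_neg this]; omega
  have hr : ∀ i, Function.Injective (r i) := by
    intro i x y hxy
    by_cases hx : x = Sum.inr i
    · by_contra hne
      have := hrpos i y (fun h => hne (hx.trans h.symm))
      rw [← hxy, hx, hr0] at this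
      omega
    by_cases hy : y = Sum.inr i
    · have := hrpos i x hx
      rw [hxy, hy, hr0] at this
      omega
    rcases x with t | k <;> rcases y with t' | k'
    · have h1 := le_antisymm (hrT i t t' hxy.le) (hrT i t' t hxy.ge)
      simp only [r, Sum.elim_inl, h1] at hxy
      rw [e.injective (Fin.ext (by omega : (e t : ℕ) = e t'))]
    · exact absurd hxy (hbig i t k' fun h => hy (by rw [h])).ne
    · exact absurd hxy (hbig i t' k fun h => hx (by rw [h])).ne'
    · have h1 : k ≠ i := fun h => hx (by rw [h])
      have h2 : k' ≠ i := fun h => hy (by rw [h])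
      simp only [r, Sum.elim_inr, if_neg h1, if_neg h2] at hxy
      rw [eI.injective (Fin.ext (by omega : (eI k : ℕ) = eI k'))]
  obtain ⟨S, hdom, hcol, u, huS, hu⟩ := exists_colorful_dominating r hr Sum.inr Sum.inr_injective
    (fun i v => by rw [hr0]; exact Nat.zero_le _)
    (by
      rintro (t | k) hv l k' hlk
      · exact hbig l t k' hlk.symm
      · exact absurd ⟨k, rfl⟩ hv)
    (by
      obtain ⟨i₀⟩ := ‹Nonempty I›
      obtain ⟨t, -⟩ := hTmk (Pi.single i₀ m) (by simp)
      exact ⟨Sum.inl t, by simp⟩)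
    (Sum.elim (fun t => c t.1) id) (fun i => rfl)
  obtain ⟨t, rfl⟩ : ∃ t, u = Sum.inl t := by
    rcases u with t | k
    · exact ⟨t, rfl⟩
    · exact absurd ⟨k, rfl⟩ hu
  let C : Finset I := Finset.univ.filter fun i => Sum.inr i ∉ S
  have hdomT : ∀ y : T, ∃ i ∈ C, ∀ x : T, Sum.inl x ∈ S → y.1 i ≤ x.1 i := by
    intro y
    obtain ⟨i, hi⟩ := hdom (Sum.inl y)
    refine ⟨i, Finset.mem_filter.2 ⟨Finset.mem_univ _, fun h => ?_⟩,
      fun x hx => hrT i y x (hi _ hx)⟩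
    have h1 := hi _ h
    have h2 := hrpos i (Sum.inl y) (by simp)
    rw [hr0] at h1
    omega
  let F : Finset T := Finset.univ.filter fun x => Sum.inl x ∈ S
  have hF : ∀ x : T, x ∈ F ↔ Sum.inl x ∈ S := by simp [F]
  choose w hwF hwmin using fun i : I => F.exists_min_image (fun x => x.1 i) ⟨t, (hF t).2 huS⟩
  let μ : I → ℕ := fun i => (w i).1 i
  have hμ : ∀ i (x : T), Sum.inl x ∈ S → μ i ≤ x.1 i := fun i x hx => hwmin i x ((hF x).2 hx)
  -- otherwise a grid point would exceed `μ` in every coordinate of `C`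
  have hsumμ : m < ∑ i ∈ C, (μ i + 1) := by
    by_contra! hle
    obtain ⟨i₁, hi₁, -⟩ := hdomT t
    let y : I → ℕ := fun i => (if i ∈ C then μ i + 1 else 0) +
      Pi.single (M := fun _ => ℕ) i₁ (m - ∑ i ∈ C, (μ i + 1)) i
    have hy : ∑ i, y i = m := by
      simp only [y, Finset.sum_add_distrib, Finset.sum_ite_mem, Finset.univ_inter,
        Finset.sum_pi_single', Finset.mem_univ, if_true]
      simp only [Finset.sum_add_distrib] at hle ⊢
      simp
      simp at hle
      omega
    obtain ⟨y', hy'⟩ := hTmk y hy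
    obtain ⟨i, hiC, hi⟩ := hdomT y'
    have h1 := hi (w i) ((hF _).1 (hwF i))
    rw [hy'] at h1
    simp only [y, if_pos hiC] at h1
    have : μ i = (w i).1 i := rfl
    omega
  have hCcard : C.card ≤ Fintype.card I := Finset.card_le_univ C
  rw [Finset.sum_add_distrib, Finset.sum_const, smul_eq_mul, mul_one] at hsumμ
  have hin : ∀ x : T, Sum.inl x ∈ S → ∀ i ∈ C, x.1 i ≤ μ i + Fintype.card I := by
    intro x hx i hi
    have h1 : ∑ j ∈ C, x.1 j ≤ m := 
      (Finset.sum_le_sum_of_subset (Finset.subset_univ C)).trans (hTsum x).le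
    rw [← Finset.add_sum_erase _ _ hi] at h1 hsumμ
    have h2 : ∑ j ∈ C.erase i, μ j ≤ ∑ j ∈ C.erase i, x.1 j :=
      Finset.sum_le_sum fun j _ => hμ j x hx
    omega
  have hout : ∀ x : T, Sum.inl x ∈ S → ∀ i, i ∉ C → x.1 i ≤ Fintype.card I := by
    intro x hx i hi
    have h1 : ∑ j ∈ insert i C, x.1 j ≤ m := 
      (Finset.sum_le_sum_of_subset (Finset.subset_univ _)).trans (hTsum x).le
    rw [Finset.sum_insert hi] at h1
    have h2 : ∑ j ∈ C, μ j ≤ ∑ j ∈ C, x.1 j := Finset.sum_le_sum fun j _ => hμ j x hx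
    omega
  refine ⟨t.1, hTsum t, fun k => ?_⟩
  have hk := Finset.mem_univ k
  rw [← hcol] at hk
  obtain ⟨x, hxS, hxk⟩ := Finset.mem_image.1 hk
  rcases x with t' | k'
  · refine Or.inr ⟨t'.1, hTsum t', hxk, fun i => ?_⟩
    by_cases hi : i ∈ C
    · have h1 := hin t huS i hi
      have h2 := hin t' hxS i hi
      have h3 := hμ i t huS
      have h4 := hμ i t' hxS
      omega
    · have h1 := hout t huS i hi
      have h2 := hout t' hxS i hi
      omega
  · obtain rfl : k' = k := hxk
    exact Or.inl (hout t huS k' fun h => (Finset.mem_filter.1 h).2 hxS)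

/-- Brouwer's fixed point theorem on the simplex. Colour `x` by an `i` with `xᵢ ≤ fᵢ(x)`; a limit `v`
of the grid points from `exists_grid_point` satisfies `vₖ ≤ fₖ(v)` for all `k`, trivially so if
`vₖ = 0`, and summing over `k` gives equality. -/
theorem exists_fixed_point_stdSimplex {I : Type*} [Fintype I] [DecidableEq I] [Nonempty I]
    (f : (I → ℝ) → I → ℝ) (hf : ContinuousOn f (stdSimplex ℝ I))
    (hmaps : ∀ x ∈ stdSimplex ℝ I, f x ∈ stdSimplex ℝ I) :
    ∃ x ∈ stdSimplex ℝ I, f x = x := by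
  classical
  have hcolor : ∀ x ∈ stdSimplex ℝ I, ∃ i, x i ≤ f x i := by
    intro x hx
    by_contra! hcon
    have h1 : ∑ i, f x i < ∑ i, x i :=
      Finset.sum_lt_sum_of_nonempty Finset.univ_nonempty fun i _ => hcon i
    rw [(hmaps x hx).2, hx.2] at h1
    exact lt_irrefl _ h1
  let p : ℕ → (I → ℕ) → I → ℝ := fun m t i => (t i : ℝ) / (m + 1)
  have hp : ∀ m t, ∑ i, t i = m + 1 → p m t ∈ stdSimplex ℝ I := by
    intro m t ht
    refine ⟨fun i => by positivity, ?_⟩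
    simp only [p]
    rw [← Finset.sum_div, ← Nat.cast_sum, ht]
    push_cast
    exact div_self (by positivity)
  have hc : ∀ m, ∃ c : (I → ℕ) → I, ∀ t, ∑ i, t i = m + 1 →
      p m t (c t) ≤ f (p m t) (c t) := by
    intro m
    have : ∀ t : I → ℕ, ∃ i, ∑ i, t i = m + 1 → p m t i ≤ f (p m t) i := by
      intro t
      by_cases ht : ∑ i, t i = m + 1
      · obtain ⟨i, hi⟩ := hcolor _ (hp m t ht)
        exact ⟨i, fun _ => hi⟩
      · exact ⟨Classical.arbitrary I, fun h => absurd h ht⟩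
    choose c hc using this
    exact ⟨c, hc⟩
  choose c hc using hc
  choose t ht htk using fun m => exists_grid_point (m + 1) (c m)
  obtain ⟨v, hv, φ, hφ, hlim⟩ := (isCompact_stdSimplex ℝ I).tendsto_subseq
    (x := fun m => p m (t m)) fun m => hp m _ (ht m)
  have hle : ∀ k, v k ≤ f v k := by
    intro k
    by_contra! hlt
    have hvk : 0 < v k := ((hmaps v hv).1 k).trans_lt hlt
    have hg : ContinuousOn (fun x => x k - f x k) (stdSimplex ℝ I) :=
      (continuous_apply k).continuousOn.sub ((continuous_apply k).comp_continuousOn hf)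
    have hev := (hg v hv).eventually (lt_mem_nhds (sub_pos.2 hlt))
    obtain ⟨ε, hε, hball⟩ := Metric.mem_nhdsWithin_iff.1 hev
    have hsmall : Filter.Tendsto (fun m : ℕ => (Fintype.card I : ℝ) / ((φ m : ℝ) + 1))
        Filter.atTop (nhds 0) := by
      have h1 : Filter.Tendsto (fun m : ℕ => (Fintype.card I : ℝ) / ((m : ℝ) + 1))
          Filter.atTop (nhds 0) :=
        tendsto_const_nhds.div_atTop
          (Filter.tendsto_atTop_add_const_right _ _ tendsto_natCast_atTop_atTop)
      exact h1.comp hφ.tendsto_atTop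
    have e1 := hsmall.eventually (gt_mem_nhds (half_pos hε))
    have e2 := hsmall.eventually (gt_mem_nhds (half_pos hvk))
    have e3 := hlim.eventually (Metric.ball_mem_nhds v (half_pos hε))
    have e4 := ((continuous_apply k).tendsto v).comp hlim |>.eventually
      (lt_mem_nhds (half_lt_self hvk))
    obtain ⟨m, h1, h2, h3, h4⟩ := (e1.and (e2.and (e3.and e4))).exists
    have hpos : (0 : ℝ) < (φ m : ℝ) + 1 := by positivity
    rcases htk (φ m) k with h | ⟨t', ht', hck, hclose⟩
    · have : p (φ m) (t (φ m)) k ≤ (Fintype.card I : ℝ) / ((φ m : ℝ) + 1) := by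
        simp only [p]; gcongr
      simp only [Function.comp_apply] at h4
      linarith
    · have hd : dist (p (φ m) t') (p (φ m) (t (φ m))) ≤
          (Fintype.card I : ℝ) / ((φ m : ℝ) + 1) := by
        rw [dist_pi_le_iff (by positivity)]
        intro i
        have ha : (t (φ m) i : ℝ) ≤ t' i + Fintype.card I := by exact_mod_cast (hclose i).1
        have hb : (t' i : ℝ) ≤ t (φ m) i + Fintype.card I := by exact_mod_cast (hclose i).2
        rw [Real.dist_eq]
        simp only [p]
        rw [← sub_div, abs_div, abs_of_pos hpos]
        gcongr
        rw [abs_le]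
        constructor <;> linarith
      have hmem : p (φ m) t' ∈ Metric.ball v ε := by
        rw [Metric.mem_ball]
        have := dist_triangle (p (φ m) t') (p (φ m) (t (φ m))) v
        rw [Function.comp_apply] at h3
        linarith
      have h5 := hball ⟨hmem, hp _ _ ht'⟩
      have h6 := hc (φ m) t' ht'
      rw [hck] at h6
      simp only [Set.mem_ofPred_eq] at h5
      linarith
  refine ⟨v, hv, ?_⟩
  have hsum : ∑ i, v i = ∑ i, f v i := by rw [hv.2, (hmaps v hv).2]
  funext k
  exact ((Finset.sum_eq_sum_iff_of_le fun i _ => hle i).1 hsum k (Finset.mem_univ k)).symm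

/-! ### Points with `h(v) ≪ 0` -/

open Fin.NatCast in
theorem Fin.forall_of_add_one {d : ℕ} {P : Fin (d + 1) → Prop} (h0 : ∃ i, P i)
    (hs : ∀ i, P i → P (i + 1)) (i : Fin (d + 1)) : P i := by
  obtain ⟨i₀, hi₀⟩ := h0
  have hiter : ∀ k : ℕ, P (i₀ + (k : Fin (d + 1))) := by
    intro k
    induction k with
    | zero => simpa using hi₀
    | succ k ih => simpa [add_assoc] using hs _ ih
  have h1 := hiter (i - i₀).val
  rw [Fin.cast_val_eq_self] at h1
  simpa using h1

/-- Let `h : ℝⁿ₊ → ℝⁿ` be continuous with `hᵢ(x) ≥ 0` whenever `x ∈ ℝⁿ₊` has `xᵢ = 0`,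
and suppose there is no nonzero `x ∈ ℝⁿ₊` with `h(x) ≥ 0`.  Then there exists `v` in
the standard simplex with `h(v) ≪ 0`. -/
theorem exists_simplex_point_neg (n : ℕ) (hn : 0 < n) (h : (Fin n → ℝ) → (Fin n → ℝ))
    (hcont : ContinuousOn h {x : Fin n → ℝ | 0 ≤ x})
    (hbd : ∀ x : Fin n → ℝ, 0 ≤ x → ∀ i, x i = 0 → 0 ≤ h x i)
    (hne : ¬ ∃ x : Fin n → ℝ, 0 ≤ x ∧ x ≠ 0 ∧ 0 ≤ h x) :
    ∃ v ∈ stdSimplex ℝ (Fin n), ∀ i, h v i < 0 := by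
  obtain ⟨d, rfl⟩ : ∃ d, n = d + 1 := ⟨n - 1, by omega⟩
  let q : (Fin (d + 1) → ℝ) → Fin (d + 1) → ℝ := fun x i => max 0 (-h x i)
  have hq0 : ∀ x i, 0 ≤ q x i := fun x i => le_max_left _ _
  have hQ : ∀ x ∈ stdSimplex ℝ (Fin (d + 1)), 0 < ∑ i, q x i := by
    intro x hx
    by_contra! hle
    have hz := (Finset.sum_eq_zero_iff_of_nonneg fun i _ => hq0 x i).1
      (le_antisymm hle (Finset.sum_nonneg fun i _ => hq0 x i))
    refine hne ⟨x, hx.1, ?_, fun i => ?_⟩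
    · rintro rfl
      simpa using hx.2
    · have : -h x i ≤ q x i := le_max_right _ _
      rw [hz i (Finset.mem_univ i)] at this
      simpa using this
  have hhc : ContinuousOn h (stdSimplex ℝ (Fin (d + 1))) := hcont.mono fun x hx => hx.1
  have hqc : ∀ i, ContinuousOn (fun x => q x i) (stdSimplex ℝ (Fin (d + 1))) := fun i =>
    continuousOn_const.sup ((continuous_apply i).comp_continuousOn hhc).neg
  -- normalize `q` and shift its coordinates cyclically
  let f : (Fin (d + 1) → ℝ) → Fin (d + 1) → ℝ := fun x i =>
    q x (Equiv.addRight 1 i) / ∑ j, q x j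
  have hfc : ContinuousOn f (stdSimplex ℝ (Fin (d + 1))) := by
    refine continuousOn_pi.2 fun i => (hqc _).div ?_ fun x hx => (hQ x hx).ne'
    exact continuousOn_finsetSum _ fun j _ => hqc j
  obtain ⟨v, hv, hfv⟩ := exists_fixed_point_stdSimplex f hfc fun x hx => by
    refine ⟨fun i => div_nonneg (hq0 _ _) (hQ x hx).le, ?_⟩
    simp only [f]
    rw [← Finset.sum_div, Equiv.sum_comp (Equiv.addRight (1 : Fin (d + 1))) (q x),
      div_self (hQ x hx).ne']
  have hneg : ∀ i, 0 < q v i → h v i < 0 := fun i hi => by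
    rcases lt_max_iff.1 hi with h0 | h0
    · exact absurd h0 (lt_irrefl _)
    · linarith
  have hstep : ∀ i, 0 < v i → 0 < q v (Equiv.addRight 1 i) := by
    intro i hi
    rw [← hfv] at hi
    by_contra! hle
    exact absurd hi (not_lt.2 (div_nonpos_of_nonpos_of_nonneg hle (hQ v hv).le))
  have hqv : ∀ i, 0 < q v i → 0 < v i := by
    intro i hi
    refine lt_of_le_of_ne (hv.1 i) fun h0 => ?_
    exact absurd (hneg i hi) (not_lt.2 (hbd v hv.1 i h0.symm))
  -- `{i | 0 < q v i}` is nonempty and closed under the cyclic shift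
  obtain ⟨i₀, hi₀⟩ : ∃ i, 0 < v i := by
    by_contra! hle
    have := Finset.sum_nonpos fun i (_ : i ∈ Finset.univ) => hle i
    rw [hv.2] at this
    linarith
  exact ⟨v, hv, fun i => hneg i (Fin.forall_of_add_one ⟨_, hstep i₀ hi₀⟩
    (fun i hi => hstep i (hqv i hi)) i)⟩
end

section
/- Let τ ≥ 0 and let f, g : ℝⁿ₊ → ℝⁿ be continuously differentiable (in particular, locally Lipschitz). Define F̄ᵢ(φ) = sup{fᵢ(x) + gᵢ(y) : 0 ≤ x ≤ φ(0), xᵢ = φᵢ(0), 0 ≤ y ≤ φ(−τ)} for φ ∈ C([−τ, 0], ℝⁿ₊). Then F̄ is Lipschitz on every compact subset K of C([−τ, 0], ℝⁿ₊): there exists L ≥ 0 such that ‖F̄(φ) − F̄(ψ)‖ ≤ L · sup_{t ∈ [−τ,0]} ‖φ(t) − ψ(t)‖ for all φ, ψ ∈ K. -/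
/-!
Since `K` is bounded, every point `x`, `y` competing in a supremum `F̄ᵢ(φ)`, `φ ∈ K`, lies in one
fixed box `[0, M]ⁿ`. That box is compact and convex, so the `C¹` maps `f` and `g` are Lipschitz on
it. A competitor `(x, y)` for `φ` is turned into a competitor for `ψ` by truncating `x` at `ψ(0)`
and `y` at `ψ(−τ)` (and resetting `xᵢ` to `ψᵢ(0)`); each of `x`, `y` moves by at most `‖φ - ψ‖`.
Hence `F̄ᵢ(φ) ≤ F̄ᵢ(ψ) + (L_f + L_g) ‖φ - ψ‖`, and the roles of `φ` and `ψ` can be exchanged.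
-/

/-- Truncating at `b` moves a point below `a` by at most the distance from `a` to `b`. -/
lemma abs_sub_min_le {x a b d : ℝ} (hxa : x ≤ a) (hab : |a - b| ≤ d) : |x - min x b| ≤ d := by
  have h := abs_le.1 hab
  rcases le_total x b with hxb | hxb
  · rw [min_eq_left hxb, sub_self, abs_zero]
    exact (abs_nonneg _).trans hab
  · rw [min_eq_right hxb, abs_of_nonneg (sub_nonneg.2 hxb)]
    linarith [h.2]

/-- A `C¹` map on the nonnegative orthant is Lipschitz on every box `[0, M]ⁿ`, stated
coordinatewise. -/
lemma exists_lipschitz_box {n : ℕ} {f : (Fin n → ℝ) → (Fin n → ℝ)}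
    (hf : ContDiffOn ℝ 1 f {x : Fin n → ℝ | 0 ≤ x}) (M : Fin n → ℝ) :
    ∃ L : ℝ, 0 ≤ L ∧ ∀ x ∈ Set.Icc 0 M, ∀ y ∈ Set.Icc 0 M, ∀ i,
      f x i ≤ f y i + L * ‖x - y‖ := by
  obtain ⟨C, hC⟩ := (hf.mono (fun x (hx : x ∈ Set.Icc 0 M) => hx.1)).exists_lipschitzOnWith
    one_ne_zero (convex_Icc 0 M) isCompact_Icc
  refine ⟨C, C.2, fun x hx y hy i => ?_⟩
  have h1 := hC.norm_sub_le hx hy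
  have h2 := (le_abs_self _).trans (norm_le_pi_norm (f x - f y) i)
  rw [Pi.sub_apply] at h2
  linarith

/-- The values competing in the supremum that defines `F̄ᵢ`, with `a = φ(0)` and `b = φ(−τ)`. -/
def competitors {n : ℕ} (f g : (Fin n → ℝ) → (Fin n → ℝ)) (i : Fin n) (a b : Fin n → ℝ) :
    Set ℝ :=
  {r : ℝ | ∃ x y : Fin n → ℝ, 0 ≤ x ∧ x ≤ a ∧ x i = a i ∧ 0 ≤ y ∧ y ≤ b ∧ r = f x i + g y i}

/-- The supremum of the competitors depends on the endpoints `(a, b)` in a one-sided Lipschitz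
way, as long as these stay in the box `[0, M]ⁿ`. -/
lemma sSup_competitors_le {n : ℕ} {f g : (Fin n → ℝ) → (Fin n → ℝ)} {M : Fin n → ℝ} {Lf Lg : ℝ}
    (hLf0 : 0 ≤ Lf) (hLg0 : 0 ≤ Lg)
    (hLf : ∀ x ∈ Set.Icc 0 M, ∀ y ∈ Set.Icc 0 M, ∀ i, f x i ≤ f y i + Lf * ‖x - y‖)
    (hLg : ∀ x ∈ Set.Icc 0 M, ∀ y ∈ Set.Icc 0 M, ∀ i, g x i ≤ g y i + Lg * ‖x - y‖)
    (i : Fin n) {a b a' b' : Fin n → ℝ} (ha : a ∈ Set.Icc 0 M) (hb : b ∈ Set.Icc 0 M)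
    (ha' : a' ∈ Set.Icc 0 M) (hb' : b' ∈ Set.Icc 0 M) {d : ℝ}
    (had : ‖a - a'‖ ≤ d) (hbd : ‖b - b'‖ ≤ d) :
    sSup (competitors f g i a b) ≤ sSup (competitors f g i a' b') + (Lf + Lg) * d := by
  have hd : 0 ≤ d := (norm_nonneg _).trans had
  have hbdd : BddAbove (competitors f g i a' b') := by
    refine ⟨(f 0 i + Lf * ‖M‖) + (g 0 i + Lg * ‖M‖), ?_⟩
    have h0 : (0 : Fin n → ℝ) ∈ Set.Icc 0 M := ⟨le_rfl, ha.1.trans ha.2⟩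
    have hnorm : ∀ x ∈ Set.Icc 0 M, ‖x - 0‖ ≤ ‖M‖ := by
      intro x hx
      rw [sub_zero]
      refine (pi_norm_le_iff_of_nonneg (norm_nonneg _)).2 fun j => ?_
      rw [Real.norm_of_nonneg (hx.1 j)]
      exact (hx.2 j).trans ((le_abs_self _).trans (norm_le_pi_norm M j))
    rintro r ⟨x, y, hx0, hxa, -, hy0, hyb, rfl⟩
    have hx : x ∈ Set.Icc 0 M := ⟨hx0, hxa.trans ha'.2⟩
    have hy : y ∈ Set.Icc 0 M := ⟨hy0, hyb.trans hb'.2⟩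
    have h1 := hLf x hx 0 h0 i
    have h2 := hLg y hy 0 h0 i
    have h3 := mul_le_mul_of_nonneg_left (hnorm x hx) hLf0
    have h4 := mul_le_mul_of_nonneg_left (hnorm y hy) hLg0
    linarith
  refine csSup_le ⟨_, a, 0, ha.1, le_rfl, rfl, le_rfl, hb.1, rfl⟩ ?_
  rintro r ⟨x, y, hx0, hxa, hxi, hy0, hyb, rfl⟩
  have hda : ∀ j, |a j - a' j| ≤ d := fun j => (norm_le_pi_norm (a - a') j).trans had
  have hdb : ∀ j, |b j - b' j| ≤ d := fun j => (norm_le_pi_norm (b - b') j).trans hbd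
  let x' : Fin n → ℝ := fun j => if j = i then a' j else min (x j) (a' j)
  let y' : Fin n → ℝ := fun j => min (y j) (b' j)
  have hx'0 : 0 ≤ x' := fun j => by
    by_cases hj : j = i
    · simpa [x', hj] using ha'.1 i
    · simpa [x', hj] using ⟨hx0 j, ha'.1 j⟩
  have hx'a : x' ≤ a' := fun j => by
    by_cases hj : j = i <;> simp [x', hj]
  have hy'0 : 0 ≤ y' := fun j => le_min (hy0 j) (hb'.1 j)
  have hy'b : y' ≤ b' := fun j => min_le_right _ _
  have hxx' : ‖x - x'‖ ≤ d := by
    refine (pi_norm_le_iff_of_nonneg hd).2 fun j => ?_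
    by_cases hj : j = i
    · simpa [x', hj, hxi] using hda i
    · simpa [x', hj] using abs_sub_min_le (hxa j) (hda j)
  have hyy' : ‖y - y'‖ ≤ d :=
    (pi_norm_le_iff_of_nonneg hd).2 fun j => abs_sub_min_le (hyb j) (hdb j)
  have h1 := hLf x ⟨hx0, hxa.trans ha.2⟩ x' ⟨hx'0, hx'a.trans ha'.2⟩ i
  have h2 := hLg y ⟨hy0, hyb.trans hb.2⟩ y' ⟨hy'0, hy'b.trans hb'.2⟩ i
  have h3 := mul_le_mul_of_nonneg_left hxx' hLf0
  have h4 := mul_le_mul_of_nonneg_left hyy' hLg0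
  have h5 : f x' i + g y' i ≤ sSup (competitors f g i a' b') :=
    le_csSup hbdd ⟨x', y', hx'0, hx'a, by simp [x'], hy'0, hy'b, rfl⟩
  linarith

/-- If `f, g` are `C¹` on the nonnegative orthant, the functional
`F̄ᵢ(φ) = sup{fᵢ(x)+gᵢ(y) : 0 ≤ x ≤ φ(0), xᵢ = φᵢ(0), 0 ≤ y ≤ φ(−τ)}` is Lipschitz on
every compact subset `K` of `C([−τ,0], ℝⁿ₊)` with respect to the supremum norm. -/
theorem Fbar_lipschitz_on_compacts (n : ℕ) (τ : ℝ) (hτ : 0 ≤ τ)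
    (f g : (Fin n → ℝ) → (Fin n → ℝ))
    (hf : ContDiffOn ℝ 1 f {x : Fin n → ℝ | 0 ≤ x})
    (hg : ContDiffOn ℝ 1 g {x : Fin n → ℝ | 0 ≤ x})
    (Fbar : C(Set.Icc (-τ) 0, Fin n → ℝ) → (Fin n → ℝ))
    (hFbar : ∀ φ : C(Set.Icc (-τ) 0, Fin n → ℝ), ∀ i : Fin n,
      Fbar φ i = sSup {r : ℝ | ∃ x y : Fin n → ℝ,
        0 ≤ x ∧ x ≤ φ ⟨0, Set.mem_Icc.mpr ⟨neg_nonpos.mpr hτ, le_rfl⟩⟩ ∧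
        x i = φ ⟨0, Set.mem_Icc.mpr ⟨neg_nonpos.mpr hτ, le_rfl⟩⟩ i ∧
        0 ≤ y ∧ y ≤ φ ⟨-τ, Set.mem_Icc.mpr ⟨le_rfl, neg_nonpos.mpr hτ⟩⟩ ∧
        r = f x i + g y i})
    (K : Set C(Set.Icc (-τ) 0, Fin n → ℝ)) (hK : IsCompact K)
    (hKpos : ∀ φ ∈ K, ∀ t : Set.Icc (-τ) 0, 0 ≤ φ t) :
    ∃ L : ℝ, 0 ≤ L ∧ ∀ φ ∈ K, ∀ ψ ∈ K, ‖Fbar φ - Fbar ψ‖ ≤ L * ‖φ - ψ‖ := by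
  obtain ⟨R, hR⟩ := hK.isBounded.exists_norm_le
  obtain ⟨Lf, hLf0, hLf⟩ := exists_lipschitz_box hf (fun _ => R)
  obtain ⟨Lg, hLg0, hLg⟩ := exists_lipschitz_box hg (fun _ => R)
  have hbox : ∀ φ ∈ K, ∀ t, φ t ∈ Set.Icc (0 : Fin n → ℝ) (fun _ => R) := fun φ hφ t =>
    ⟨hKpos φ hφ t, fun j => (le_abs_self _).trans <|
      (norm_le_pi_norm (φ t) j).trans ((φ.norm_coe_le_norm t).trans (hR φ hφ))⟩
  have key : ∀ φ ∈ K, ∀ ψ ∈ K, ∀ i, Fbar φ i ≤ Fbar ψ i + (Lf + Lg) * ‖φ - ψ‖ := by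
    intro φ hφ ψ hψ i
    rw [hFbar φ i, hFbar ψ i]
    exact sSup_competitors_le hLf0 hLg0 hLf hLg i (hbox φ hφ _) (hbox φ hφ _)
      (hbox ψ hψ _) (hbox ψ hψ _) ((φ - ψ).norm_coe_le_norm _) ((φ - ψ).norm_coe_le_norm _)
  refine ⟨Lf + Lg, add_nonneg hLf0 hLg0, fun φ hφ ψ hψ => ?_⟩
  refine (pi_norm_le_iff_of_nonneg (by positivity)).2 fun i => ?_
  have h1 := key φ hφ ψ hψ i
  have h2 := key ψ hψ φ hφ i
  rw [norm_sub_rev ψ φ] at h2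
  rw [Pi.sub_apply, Real.norm_eq_abs, abs_le]
  constructor <;> linarith
end

section
/- Let f, g : ℝⁿ₊ → ℝⁿ be continuous and subhomogeneous of degree α > 0, and define h : ℝⁿ₊ → ℝⁿ by hᵢ(w) = sup{fᵢ(x) + gᵢ(y) : 0 ≤ x ≤ w, xᵢ = wᵢ, 0 ≤ y ≤ w}. Then h is subhomogeneous of degree α: h(λw) ≤ λ^α h(w) for all λ ≥ 1 and all w ∈ ℝⁿ₊. -/
/-! Scaling by `lam⁻¹` maps the constraint set of `lam • w` onto that of `w`, so every value
`fᵢ(x) + gᵢ(y)` competing for `hᵢ(lam • w)` is at most `lam ^ α` times the value at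
`(lam⁻¹ • x, lam⁻¹ • y)`, which competes for `hᵢ(w)`. Continuity on the compact box `[0, w]`
makes the supremum defining `hᵢ(w)` a genuine (bounded) one. -/

/-- If `f, g` are continuous and subhomogeneous of degree `α > 0` on the nonnegative
orthant, then `h` defined by `hᵢ(w) = sup{fᵢ(x)+gᵢ(y) : 0 ≤ x ≤ w, xᵢ = wᵢ, 0 ≤ y ≤ w}`
is also subhomogeneous of degree `α`: `h(λw) ≤ λ^α h(w)` for all `λ ≥ 1`, `w ∈ ℝⁿ₊`. -/
theorem h_subhomogeneous (n : ℕ) (α : ℝ) (hα : 0 < α)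
    (f g : (Fin n → ℝ) → (Fin n → ℝ))
    (hf : ContinuousOn f {x : Fin n → ℝ | 0 ≤ x})
    (hg : ContinuousOn g {x : Fin n → ℝ | 0 ≤ x})
    (hfsub : ∀ lam : ℝ, 1 ≤ lam → ∀ x : Fin n → ℝ, 0 ≤ x →
      f (lam • x) ≤ (lam ^ α) • f x)
    (hgsub : ∀ lam : ℝ, 1 ≤ lam → ∀ x : Fin n → ℝ, 0 ≤ x →
      g (lam • x) ≤ (lam ^ α) • g x) :
    ∀ lam : ℝ, 1 ≤ lam → ∀ w : Fin n → ℝ, 0 ≤ w → ∀ i : Fin n,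
      sSup {r : ℝ | ∃ x y : Fin n → ℝ, 0 ≤ x ∧ x ≤ lam • w ∧ x i = (lam • w) i ∧
          0 ≤ y ∧ y ≤ lam • w ∧ r = f x i + g y i} ≤
      (lam ^ α) * sSup {r : ℝ | ∃ x y : Fin n → ℝ, 0 ≤ x ∧ x ≤ w ∧ x i = w i ∧
          0 ≤ y ∧ y ≤ w ∧ r = f x i + g y i} := by
  intro lam hlam w hw i
  have hpos : 0 < lam := by linarith
  apply csSup_le
  · exact ⟨_, lam • w, lam • w, smul_nonneg hpos.le hw, le_rfl, rfl,
      smul_nonneg hpos.le hw, le_rfl, rfl⟩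
  · rintro r ⟨x, y, hx0, hxw, hxi, hy0, hyw, rfl⟩
    have hbdd : BddAbove {r : ℝ | ∃ x y : Fin n → ℝ, 0 ≤ x ∧ x ≤ w ∧ x i = w i ∧
        0 ≤ y ∧ y ≤ w ∧ r = f x i + g y i} := by
      have bound : ∀ k : (Fin n → ℝ) → (Fin n → ℝ), ContinuousOn k {x : Fin n → ℝ | 0 ≤ x} →
          ∃ C : ℝ, ∀ x : Fin n → ℝ, 0 ≤ x → x ≤ w → k x i ≤ C := by
        intro k hk
        have hki : ContinuousOn (fun x => k x i) (Set.Icc 0 w) :=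
          (continuousOn_pi.1 hk i).mono fun x hx => hx.1
        obtain ⟨C, hC⟩ := isCompact_Icc.bddAbove_image hki
        exact ⟨C, fun x h0 h1 => hC ⟨x, ⟨h0, h1⟩, rfl⟩⟩
      obtain ⟨A, hA⟩ := bound f hf
      obtain ⟨B, hB⟩ := bound g hg
      refine ⟨A + B, ?_⟩
      rintro r ⟨x, y, hx0, hxw, -, hy0, hyw, rfl⟩
      exact add_le_add (hA x hx0 hxw) (hB y hy0 hyw)
    have hsx : 0 ≤ lam⁻¹ • x := smul_nonneg (inv_nonneg.2 hpos.le) hx0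
    have hsy : 0 ≤ lam⁻¹ • y := smul_nonneg (inv_nonneg.2 hpos.le) hy0
    have scale : ∀ z : Fin n → ℝ, z ≤ lam • w → lam⁻¹ • z ≤ w := fun z hz =>
      (inv_smul_le_iff_of_pos hpos).2 hz
    have hmem := le_csSup hbdd ⟨lam⁻¹ • x, lam⁻¹ • y, hsx, scale x hxw, by
      simp [hxi, hpos.ne'], hsy, scale y hyw, rfl⟩
    have h1 := hfsub lam hlam _ hsx i
    have h2 := hgsub lam hlam _ hsy i
    rw [smul_inv_smul₀ hpos.ne', Pi.smul_apply, smul_eq_mul] at h1 h2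
    calc f x i + g y i
        ≤ lam ^ α * (f (lam⁻¹ • x) i + g (lam⁻¹ • y) i) := by rw [mul_add]; exact add_le_add h1 h2
      _ ≤ _ := mul_le_mul_of_nonneg_left hmem (Real.rpow_nonneg hpos.le α)
end

section
/- Let f, g : ℝⁿ₊ → ℝⁿ be continuous with g(x) ≥ 0 for all x ∈ ℝⁿ₊ and fᵢ(x) ≥ 0 for all x ∈ ℝⁿ₊ with xᵢ = 0, and suppose that for every w ∈ ℝⁿ₊ with w ≠ 0 there is an index i such that sup{gᵢ(y) : 0 ≤ y ≤ w} < −sup{fᵢ(x) : 0 ≤ x ≤ w, xᵢ = wᵢ}. Define h : ℝⁿ₊ → ℝⁿ by hᵢ(w) = sup{fᵢ(x) + gᵢ(y) : 0 ≤ x ≤ w, xᵢ = wᵢ, 0 ≤ y ≤ w}. Then there exists v in the standard simplex Δₙ with v ≫ 0 and h(v) ≪ 0, i.e. vᵢ > 0 and hᵢ(v) < 0 for all i. -/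
/-!
Put `h w i < 0` for the condition that `f x i + g y i < 0` for all admissible `x`, `y`. The sets
`U i = {w | h w i < 0}` are open, they cover the simplex by the main hypothesis, and `U i` misses
the face `w i = 0` because `f` and `g` are nonnegative there. So the theorem is a covering result
of Knaster–Kuratowski–Mazurkiewicz type (`exists_mem_iInter_of_cover`): such `U i` have a common
point in the simplex, and this point is automatically in its interior.

The covering result is derived from a combinatorial lemma of Scarf
(`exists_colorful_primitive`), which takes the place of a triangulation and Sperner's lemma.
Given a finite set with one injective ranking per index `i` and one "slack" point per index,
a set of `card I` elements is primitive if no element outranks its minimum in every ranking.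
A set of `card I - 1` elements is contained in an even number of primitive sets
(`even_extensions`), except for the set of all slacks but one, which is contained in exactly one
(`card_extensions_slack`). Counting incidences modulo 2, every coloring under which slack `i` has
color `i` admits a primitive set carrying all colors.

For the points of the simplex with denominator `N`, ranked by their coordinates, the non-slack part
of a primitive set has diameter at most `n / N`, and it lies near the face spanned by the indices
`C` whose slack is absent. This yields a point `p` of that face close to a point of each color in
`C` (`exists_small_cell`). A point is colored `i + 1` when a ball of Lebesgue-number radius about
it lies in `U i`; then `i + 1 ∈ C` gives `p ∈ U i`, hence `p i ≠ 0`, hence `i ∈ C`. So `C` is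
closed under the cyclic shift, it contains all indices, and `p` lies in every `U i`.
-/

/-! ### Scarf's lemma on primitive sets -/

section Scarf

variable {I X : Type*} [Fintype I] [DecidableEq I] [DecidableEq X]

/-- A set of `card I` elements such that no `z` outranks the minimum of the set strictly in every
ranking `r i`. Larger values of `r i` mean higher rank. -/
def Primitive (r : I → X → ℕ) (P : Finset X) : Prop :=
  P.card = Fintype.card I ∧ ∀ z, ∃ i, ∀ x ∈ P, r i z ≤ r i x

/-- With `m i` the `r i`-minimum of `Q`: the indices other than `a` already account for all of `Q` as
minima, and `y` lies below `m a` in ranking `a` and is the `r a`-greatest of the elements exceeding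
`m i` for every `i ≠ a`. This describes the `y` for which `insert y Q` is primitive with `y` as
its `r a`-minimum. -/
def Replaces (r : I → X → ℕ) (Q : Finset X) (m : I → X) (a : I) (y : X) : Prop :=
  (∀ x ∈ Q, ∃ i, i ≠ a ∧ m i = x) ∧ r a y < r a (m a) ∧ (∀ i, i ≠ a → r i (m i) < r i y) ∧
    ∀ z, (∀ i, i ≠ a → r i (m i) < r i z) → r a z ≤ r a y

theorem primitive_insert_iff (r : I → X → ℕ) (hr : ∀ i, Function.Injective (r i))
    (Q : Finset X) (hQ : Q.card + 1 = Fintype.card I) (m : I → X)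
    (hm : ∀ i, m i ∈ Q ∧ ∀ x ∈ Q, r i (m i) ≤ r i x) (y : X) (hy : y ∉ Q) :
    Primitive r (insert y Q) ↔ ∃ a, Replaces r Q m a y := by
  constructor
  · rintro ⟨-, hP⟩
    obtain ⟨a, ha⟩ := hP y
    have key : ∀ x ∈ Q, ∃ i, (∀ x' ∈ insert y Q, r i x ≤ r i x') ∧ m i = x := by
      intro x hx
      obtain ⟨i, hi⟩ := hP x
      exact ⟨i, hi, hr i (le_antisymm ((hm i).2 x hx)
        (hi _ (Finset.mem_insert_of_mem (hm i).1)))⟩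
    -- an index for which `y` is minimal is not one for which an element of `Q` is
    have hne : ∀ i, (∀ x' ∈ insert y Q, r i y ≤ r i x') → ∀ x ∈ Q,
        ∀ j, (∀ x' ∈ insert y Q, r j x ≤ r j x') → j ≠ i := by
      rintro i hi x hx j hj rfl
      have : x = y := hr j (le_antisymm (hj y (Finset.mem_insert_self _ _))
        (hi x (Finset.mem_insert_of_mem hx)))
      exact hy (this ▸ hx)
    refine ⟨a, ?_, ?_, ?_, ?_⟩
    · intro x hx
      obtain ⟨i, hi, hix⟩ := key x hx
      exact ⟨i, hne a ha x hx i hi, hix⟩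
    · refine lt_of_le_of_ne (ha _ (Finset.mem_insert_of_mem (hm a).1)) fun h => hy ?_
      rw [hr a h]; exact (hm a).1
    · intro i hia
      by_contra hlt
      have hi : ∀ x' ∈ insert y Q, r i y ≤ r i x' := by
        intro x' hx'
        rcases Finset.mem_insert.1 hx' with rfl | h
        · exact le_rfl
        · exact (not_lt.1 hlt).trans ((hm i).2 _ h)
      have hsub : Q ⊆ ((Finset.univ.erase a).erase i).image m := by
        intro x hx
        obtain ⟨j, hj, hjx⟩ := key x hx
        refine Finset.mem_image.2 ⟨j, ?_, hjx⟩
        simp [hne a ha x hx j hj, hne i hi x hx j hj]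
      have h1 := (Finset.card_le_card hsub).trans Finset.card_image_le
      rw [Finset.card_erase_of_mem (by simp [hia]), Finset.card_erase_of_mem (Finset.mem_univ _),
        Finset.card_univ] at h1
      have : 0 < Q.card := Finset.card_pos.2 ⟨_, (hm a).1⟩
      omega
    · intro z hz
      obtain ⟨i, hi⟩ := hP z
      by_cases hia : i = a
      · subst hia; exact hi y (Finset.mem_insert_self _ _)
      · have := hi _ (Finset.mem_insert_of_mem (hm i).1)
        have := hz i hia
        omega
  · rintro ⟨a, -, h2, h3, h4⟩
    refine ⟨by rw [Finset.card_insert_of_notMem hy, hQ], fun z => ?_⟩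
    by_contra! hcon
    have hz : r a z ≤ r a y := by
      apply h4
      intro i hia
      obtain ⟨x, hx, hlt⟩ := hcon i
      rcases Finset.mem_insert.1 hx with rfl | h
      · exact (h3 i hia).trans hlt
      · exact ((hm i).2 x h).trans_lt hlt
    obtain ⟨x, hx, hlt⟩ := hcon a
    rcases Finset.mem_insert.1 hx with rfl | h
    · omega
    · have := (hm a).2 x h
      omega

/-- A set of `card I` elements that does not carry all colors has zero or two facets carrying exactly
the colors other than `k`: in the second case exactly two elements share a color, and either may be
removed. -/
theorem even_faces (c : X → I) (k : I) (P : Finset X) (hP : P.card = Fintype.card I)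
    (hc : P.image c ≠ Finset.univ) :
    Even (P.filter fun y => (P.erase y).image c = Finset.univ.erase k).card := by
  rcases (P.filter fun y => (P.erase y).image c = Finset.univ.erase k).eq_empty_or_nonempty
    with h | ⟨y, hy⟩
  · rw [h]; simp
  have hinj : ∀ u, u ∈ P → (P.erase u).image c = Finset.univ.erase k →
      Set.InjOn c (P.erase u : Finset X) := by
    intro u hu h
    apply Finset.injOn_of_card_image_eq
    rw [h, Finset.card_erase_of_mem (Finset.mem_univ _), Finset.card_erase_of_mem hu, hP,
      Finset.card_univ]
  obtain ⟨hyP, hyc⟩ := Finset.mem_filter.1 hy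
  have himg : P.image c = insert (c y) (Finset.univ.erase k) := by
    rw [← hyc, ← Finset.image_insert, Finset.insert_erase hyP]
  have hcy : c y ≠ k := by
    rintro rfl
    exact hc (by rw [himg, Finset.insert_erase (Finset.mem_univ _)])
  obtain ⟨y', hy', hcy'⟩ := Finset.mem_image.1
    (show c y ∈ (P.erase y).image c by rw [hyc]; simp [hcy])
  obtain ⟨hne, hy'P⟩ := Finset.mem_erase.1 hy'
  have hEq : (P.filter fun y => (P.erase y).image c = Finset.univ.erase k) = {y, y'} := by
    ext u
    rw [Finset.mem_filter, Finset.mem_insert, Finset.mem_singleton]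
    constructor
    · rintro ⟨huP, hu⟩
      by_contra! hcon
      exact hne (hinj u huP hu (by simp [hy'P, hcon.2.symm]) (by simp [hyP, hcon.1.symm]) hcy')
    · rintro (rfl | rfl)
      · exact ⟨hyP, hyc⟩
      · refine ⟨hy'P, ?_⟩
        rw [← hyc]
        ext i
        simp only [Finset.mem_image, Finset.mem_erase]
        constructor
        · rintro ⟨x, ⟨hx1, hx2⟩, rfl⟩
          by_cases hxy : x = y
          · exact ⟨u, ⟨hne, hy'P⟩, by rw [hxy, hcy']⟩
          · exact ⟨x, ⟨hxy, hx2⟩, rfl⟩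
        · rintro ⟨x, ⟨hx1, hx2⟩, rfl⟩
          by_cases hxy : x = u
          · exact ⟨y, ⟨hne.symm, hyP⟩, by rw [hxy, hcy']⟩
          · exact ⟨x, ⟨hxy, hx2⟩, rfl⟩
  rw [hEq, Finset.card_pair hne.symm]
  exact even_two

variable [Fintype X]

/-- If `Q` has an extension to a primitive set, then exactly two indices `a`, `b` have the same minimum
in `Q`, and each of them contributes exactly one extension, provided (`hY`) that there are candidates
for both. -/
theorem even_extensions (r : I → X → ℕ) (hr : ∀ i, Function.Injective (r i))
    (Q : Finset X) (hQ : Q.card + 1 = Fintype.card I) (m : I → X)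
    (hm : ∀ i, m i ∈ Q ∧ ∀ x ∈ Q, r i (m i) ≤ r i x)
    (hY : ∀ a, ∃ z, ∀ i, i ≠ a → r i (m i) < r i z)
    (E : Finset X) (hE : ∀ y, y ∈ E ↔ y ∉ Q ∧ Primitive r (insert y Q)) :
    Even E.card := by
  rcases E.eq_empty_or_nonempty with rfl | ⟨y, hyE⟩
  · simp
  obtain ⟨hy, hP⟩ := (hE y).1 hyE
  obtain ⟨a, ha⟩ := (primitive_insert_iff r hr Q hQ m hm y hy).1 hP
  obtain ⟨b, hba, hb⟩ := ha.1 (m a) (hm a).1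
  -- `m` is injective away from `a`, by counting
  have hinj : Set.InjOn m (Finset.univ.erase a : Finset I) := by
    apply Finset.injOn_of_card_image_eq
    apply le_antisymm Finset.card_image_le
    rw [Finset.card_erase_of_mem (Finset.mem_univ _), Finset.card_univ, ← hQ]
    apply Finset.card_le_card
    intro x hx
    obtain ⟨i, hi, hix⟩ := ha.1 x hx
    exact Finset.mem_image.2 ⟨i, by simp [hi], hix⟩
  have hQb : ∀ x ∈ Q, ∃ i, i ≠ b ∧ m i = x := by
    intro x hx
    obtain ⟨i, hi, hix⟩ := ha.1 x hx
    by_cases hib : i = b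
    · exact ⟨a, hba.symm, by rw [← hb, ← hib, hix]⟩
    · exact ⟨i, hib, hix⟩
  have hab : ∀ a', (∀ x ∈ Q, ∃ i, i ≠ a' ∧ m i = x) → a' = a ∨ a' = b := by
    intro a' h
    by_cases h1 : a' = a
    · exact Or.inl h1
    right
    obtain ⟨i, hi, hia⟩ := h (m a') (hm a').1
    by_cases h2 : i = a
    · subst h2
      exact hinj (by simp [h1]) (by simp [hba]) (by rw [hb, hia])
    · exact absurd (hinj (by simp [h2]) (by simp [h1]) hia) hi
  have huniq : ∀ a' u v, Replaces r Q m a' u → Replaces r Q m a' v → u = v := by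
    intro a' u v hu hv
    exact hr a' (le_antisymm (hv.2.2.2 u hu.2.2.1) (hu.2.2.2 v hv.2.2.1))
  obtain ⟨y', hy'mem, hy'max⟩ := Finset.exists_max_image
    (Finset.univ.filter fun z => ∀ i, i ≠ b → r i (m i) < r i z) (r b)
    (by obtain ⟨z, hz⟩ := hY b; exact ⟨z, by simpa using hz⟩)
  have hy'1 : ∀ i, i ≠ b → r i (m i) < r i y' := by simpa using hy'mem
  have hy'Q : y' ∉ Q := by
    intro h
    obtain ⟨i, hi, hix⟩ := hQb y' h
    have := hy'1 i hi
    rw [hix] at this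
    exact lt_irrefl _ this
  have hb' : Replaces r Q m b y' := by
    refine ⟨hQb, ?_, hy'1, fun z hz => hy'max z (by simpa using hz)⟩
    by_contra hle
    have hlt : r b (m b) < r b y' :=
      lt_of_le_of_ne (not_lt.1 hle) fun h => hy'Q (hr b h ▸ (hm b).1)
    have h1 := ha.2.2.2 y' fun i _ => by
      by_cases hib : i = b
      · rw [hib]; exact hlt
      · exact hy'1 i hib
    have h2 := ha.2.1
    have h3 := hy'1 a hba.symm
    omega
  have hne : y ≠ y' := by
    rintro rfl
    exact lt_asymm ha.2.1 (hy'1 a hba.symm)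
  have hEeq : E = {y, y'} := by
    ext u
    rw [hE, Finset.mem_insert, Finset.mem_singleton]
    constructor
    · rintro ⟨hu, hPu⟩
      obtain ⟨a', ha'⟩ := (primitive_insert_iff r hr Q hQ m hm u hu).1 hPu
      rcases hab a' ha'.1 with rfl | rfl
      · exact Or.inl (huniq _ _ _ ha' ha)
      · exact Or.inr (huniq _ _ _ ha' hb')
    · rintro (rfl | rfl)
      · exact ⟨hy, hP⟩
      · exact ⟨hy'Q, (primitive_insert_iff r hr Q hQ m hm _ hy'Q).2 ⟨b, hb'⟩⟩
  rw [hEeq, Finset.card_pair hne]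
  exact even_two

/-- The set of all slacks other than `s k` extends to a primitive set only by the `r k`-greatest of the
remaining elements. -/
theorem card_extensions_slack (r : I → X → ℕ) (hr : ∀ i, Function.Injective (r i))
    (s : I → X) (hs : Function.Injective s) (hmin : ∀ i x, r i (s i) ≤ r i x)
    (hbig : ∀ i j x, i ≠ j → x ∉ Set.range s → r i x < r i (s j)) (k : I)
    (E : Finset X) (hE : ∀ y, y ∈ E ↔ y ∉ (Finset.univ.erase k).image s ∧
      Primitive r (insert y ((Finset.univ.erase k).image s))) :
    E.card = 1 := by
  set Q := (Finset.univ.erase k).image s with hQdef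
  have hQ : ∀ j, j ≠ k → s j ∈ Q := fun j hj => Finset.mem_image.2 ⟨j, by simp [hj], rfl⟩
  have hkQ : s k ∉ Q := by
    intro h
    obtain ⟨j, hj, hjk⟩ := Finset.mem_image.1 h
    simp [hs hjk] at hj
  obtain ⟨y, hyQ, hymax⟩ := Finset.exists_max_image (Finset.univ \ Q) (r k) ⟨s k, by simp [hkQ]⟩
  have hyQ : y ∉ Q := by simpa using hyQ
  have hymax : ∀ z, z ∉ Q → r k z ≤ r k y := fun z hz => hymax z (by simpa using hz)
  rw [Finset.card_eq_one]
  refine ⟨y, ?_⟩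
  ext u
  rw [hE, Finset.mem_singleton]
  constructor
  · rintro ⟨huQ, -, hP⟩
    apply hr k
    apply le_antisymm (hymax u huQ)
    obtain ⟨i, hi⟩ := hP y
    by_cases hik : i = k
    · subst hik; exact hi u (Finset.mem_insert_self _ _)
    · have h1 := hi (s i) (Finset.mem_insert_of_mem (hQ i hik))
      have : y = s i := hr i (le_antisymm h1 (hmin i y))
      exact absurd (this ▸ hQ i hik) hyQ
  · rintro rfl
    refine ⟨hyQ, ?_, fun z => ?_⟩
    · rw [Finset.card_insert_of_notMem hyQ, hQdef, Finset.card_image_of_injective _ hs,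
        Finset.card_erase_of_mem (Finset.mem_univ _), Finset.card_univ]
      have : 0 < Fintype.card I := Fintype.card_pos_iff.2 ⟨k⟩
      omega
    · by_cases hz : z ∈ Q
      · obtain ⟨j, -, rfl⟩ := Finset.mem_image.1 hz
        exact ⟨j, fun x _ => hmin j x⟩
      · refine ⟨k, fun x hx => ?_⟩
        rcases Finset.mem_insert.1 hx with rfl | hx
        · exact hymax z hz
        · obtain ⟨j, hj, rfl⟩ := Finset.mem_image.1 hx
          have hjk : j ≠ k := by simpa using hj
          by_cases hzs : z ∈ Set.range s
          · obtain ⟨l, rfl⟩ := hzs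
            have : l = k := by
              by_contra h
              exact hz (hQ l h)
            subst this
            exact hmin _ _
          · exact (hbig k j z hjk.symm hzs).le

/-- Scarf's lemma. The slack `s i` is lowest in ranking `i` and, in every other ranking, above all
non-slack elements. -/
theorem exists_colorful_primitive (r : I → X → ℕ) (hr : ∀ i, Function.Injective (r i))
    (s : I → X) (hs : Function.Injective s) (hmin : ∀ i x, r i (s i) ≤ r i x)
    (hbig : ∀ i j x, i ≠ j → x ∉ Set.range s → r i x < r i (s j)) (k : I)
    (c : X → I) (hcs : ∀ i, c (s i) = i) :
    ∃ P, Primitive r P ∧ P.image c = Finset.univ := by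
  classical
  by_contra! hcon
  let G : Finset (Finset X) := Finset.univ.filter fun Q =>
    Q.card + 1 = Fintype.card I ∧ Q.image c = Finset.univ.erase k
  let E : Finset X → Finset X := fun Q =>
    Finset.univ.filter fun y => y ∉ Q ∧ Primitive r (insert y Q)
  have hE : ∀ Q y, y ∈ E Q ↔ y ∉ Q ∧ Primitive r (insert y Q) := by simp [E]
  let Pr : Finset (Finset X) := Finset.univ.filter fun P => Primitive r P
  let D : Finset X → Finset X := fun P =>
    P.filter fun y => (P.erase y).image c = Finset.univ.erase k
  -- Incidences (facet `Q` with the colors other than `k`, primitive set `P = insert y Q`), counted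
  -- from the side of `Q` and from the side of `P`.
  have hcard : (G.sigma E).card = (Pr.sigma D).card := by
    refine Finset.card_bij' (fun q _ => ⟨insert q.2 q.1, q.2⟩) (fun p _ => ⟨p.1.erase p.2, p.2⟩)
      ?_ ?_ ?_ ?_
    · rintro ⟨Q, y⟩ h
      simp only [G, E, Finset.mem_sigma, Finset.mem_filter, Finset.mem_univ, true_and] at h
      simp only [Pr, D, Finset.mem_sigma, Finset.mem_filter, Finset.mem_univ, true_and]
      exact ⟨h.2.2, Finset.mem_insert_self _ _, by rw [Finset.erase_insert h.2.1]; exact h.1.2⟩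
    · rintro ⟨P, y⟩ h
      simp only [Pr, D, Finset.mem_sigma, Finset.mem_filter, Finset.mem_univ, true_and] at h
      simp only [G, E, Finset.mem_sigma, Finset.mem_filter, Finset.mem_univ, true_and]
      refine ⟨⟨?_, h.2.2⟩, Finset.notMem_erase _ _, by rw [Finset.insert_erase h.2.1]; exact h.1⟩
      rw [Finset.card_erase_add_one h.2.1]
      exact h.1.1
    · rintro ⟨Q, y⟩ h
      simp only [G, E, Finset.mem_sigma, Finset.mem_filter, Finset.mem_univ, true_and] at h
      simp [Finset.erase_insert h.2.1]
    · rintro ⟨P, y⟩ h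
      simp only [Pr, D, Finset.mem_sigma, Finset.mem_filter, Finset.mem_univ, true_and] at h
      simp [Finset.insert_erase h.2.1]
  rw [Finset.card_sigma, Finset.card_sigma] at hcard
  have hR : Even (∑ P ∈ Pr, (D P).card) := by
    apply Finset.even_sum
    intro P hP
    have hP : Primitive r P := by simpa [Pr] using hP
    exact even_faces c k P hP.1 (hcon P hP)
  set Q₀ := (Finset.univ.erase k).image s with hQ₀
  have hQ₀G : Q₀ ∈ G := by
    simp only [G, Finset.mem_filter, Finset.mem_univ, true_and]
    constructor
    · rw [hQ₀, Finset.card_image_of_injective _ hs,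
        Finset.card_erase_add_one (Finset.mem_univ _), Finset.card_univ]
    · rw [hQ₀, Finset.image_image]
      have : c ∘ s = id := funext hcs
      rw [this, Finset.image_id]
  -- For `Q ≠ Q₀`, the slack `s a` is a candidate for index `a`: it fails to exceed `m i` only if `m i`
  -- is a slack `s j` with `j ≠ i`, which forces all of `Q` to consist of slacks.
  have hL : Even (∑ Q ∈ G.erase Q₀, (E Q).card) := by
    apply Finset.even_sum
    intro Q hQ
    obtain ⟨hne, hQ⟩ := Finset.mem_erase.1 hQ
    simp only [G, Finset.mem_filter, Finset.mem_univ, true_and] at hQ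
    obtain ⟨hQc, hQi⟩ := hQ
    have hQne : Q.Nonempty := by
      rw [Finset.nonempty_iff_ne_empty]
      rintro rfl
      apply hne
      rw [hQ₀, ← hQi]; simp
    choose m hm using fun i => Finset.exists_min_image Q (r i) hQne
    refine even_extensions r hr Q hQc m hm (fun a => ⟨s a, fun i hia => ?_⟩) (E Q) (hE Q)
    by_cases hmi : m i ∈ Set.range s
    · obtain ⟨j, hj⟩ := hmi
      by_cases hji : j = i
      · rw [← hj, hji]
        exact lt_of_le_of_ne (hmin i _) fun h => hia (hs (hr i h))
      · exfalso
        apply hne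
        have hall : ∀ x ∈ Q, s (c x) = x := by
          intro x hx
          by_cases hxs : x ∈ Set.range s
          · obtain ⟨l, rfl⟩ := hxs
            rw [hcs]
          · have h1 := hbig i j x (Ne.symm hji) hxs
            have h2 := (hm i).2 x hx
            rw [← hj] at h2
            omega
        rw [hQ₀, ← hQi, Finset.image_image]
        ext x
        rw [Finset.mem_image]
        constructor
        · exact fun hx => ⟨x, hx, hall x hx⟩
        · rintro ⟨u, hu, rfl⟩
          rw [Function.comp, hall u hu]; exact hu
    · exact hbig i a _ hia hmi
  have h1 : (E Q₀).card = 1 := card_extensions_slack r hr s hs hmin hbig k _ (hE Q₀)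
  rw [← Finset.add_sum_erase _ _ hQ₀G, h1] at hcard
  rw [← hcard] at hR
  rw [Nat.even_add] at hR
  simp [hL] at hR

end Scarf


/-! ### From Scarf's lemma to a covering lemma for the simplex -/

theorem exists_grid_ge {n : ℕ} (N : ℕ) (m : Fin n → ℕ) (hm : ∑ i, m i ≤ N) (k : Fin n) :
    ∃ p : Fin n → ℕ, ∑ i, p i = N ∧ (∀ i, m i ≤ p i) ∧ ∀ i, i ≠ k → p i = m i := by
  refine ⟨m + Pi.single k (N - ∑ i, m i), ?_, fun i => by simp, fun i hi => by simp [hi]⟩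
  simp only [Pi.add_apply, Finset.sum_add_distrib, Finset.sum_pi_single', Finset.mem_univ, if_true]
  omega

/-- Discrete covering lemma for the points of `ℕⁿ` with coordinate sum `N`: for every coloring there
are a nonempty set `C` of colors and a point `p` supported on `C` such that each color in `C` occurs
within distance `n` of `p`. -/
theorem exists_small_cell {n : ℕ} (N : ℕ) (k₀ : Fin n) (c : (Fin n → ℕ) → Fin n) :
    ∃ (p : Fin n → ℕ) (C : Finset (Fin n)), ∑ i, p i = N ∧ C.Nonempty ∧ (∀ i, i ∉ C → p i = 0) ∧
      ∀ i ∈ C, ∃ x : Fin n → ℕ, ∑ j, x j = N ∧ c x = i ∧ ∀ j, x j ≤ p j + n ∧ p j ≤ x j + n := by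
  classical
  let T := {x : Fin n → ℕ // x ∈ Finset.piAntidiag Finset.univ N}
  have hT : ∀ x : T, ∑ i, x.1 i = N := fun x => (Finset.mem_piAntidiag.1 x.2).1
  have mkT : ∀ x : Fin n → ℕ, ∑ i, x i = N → x ∈ Finset.piAntidiag Finset.univ N :=
    fun x hx => Finset.mem_piAntidiag.2 ⟨hx, by simp⟩
  have hle : ∀ (x : T) i, x.1 i ≤ N := fun x i => by
    exact (Finset.single_le_sum (f := x.1) (fun _ _ => Nat.zero_le _) (Finset.mem_univ i)).trans
      (hT x).le
  let _ : Fintype T := inferInstanceAs (Fintype (Finset.piAntidiag (Finset.univ : Finset (Fin n)) N))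
  let M := Fintype.card T
  let e : T ≃ Fin M := Fintype.equivFin T
  -- Grid points are ranked by their `i`-th coordinate, with ties broken by the enumeration `e`.
  let r : Fin n → T ⊕ Fin n → ℕ := fun i => Sum.elim (fun x => x.1 i * M + e x + 1)
    (fun j => if j = i then 0 else (N + 1) * M + 1 + j)
  have hrl : ∀ i (x : T), r i (Sum.inl x) = x.1 i * M + e x + 1 := fun _ _ => rfl
  have hrr : ∀ i j, r i (Sum.inr j) = if j = i then 0 else (N + 1) * M + 1 + j := fun _ _ => rfl
  have hlt : ∀ (i : Fin n) (x y : T), x.1 i < y.1 i → r i (Sum.inl x) < r i (Sum.inl y) := by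
    intro i x y h
    rw [hrl, hrl]
    have h1 : (x.1 i + 1) * M ≤ y.1 i * M := Nat.mul_le_mul_right _ h
    have h2 := (e x).2
    rw [Nat.add_mul] at h1
    omega
  have hbig0 : ∀ (i : Fin n) (x : T), r i (Sum.inl x) < (N + 1) * M + 1 := by
    intro i x
    rw [hrl]
    have h1 : x.1 i * M ≤ N * M := Nat.mul_le_mul_right _ (hle x i)
    have h2 := (e x).2
    rw [Nat.add_mul]
    omega
  have hr : ∀ i, Function.Injective (r i) := by
    rintro i (x | j) (y | l) h
    · have h1 : x.1 i = y.1 i := by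
        rcases lt_trichotomy (x.1 i) (y.1 i) with h' | h' | h'
        · exact absurd h (hlt i x y h').ne
        · exact h'
        · exact absurd h (hlt i y x h').ne'
      rw [hrl, hrl, h1] at h
      have : e x = e y := Fin.ext (by omega)
      rw [e.injective this]
    · have h1 := hbig0 i x
      rw [h, hrr] at h1
      rw [hrl, hrr] at h
      split_ifs at h h1
      all_goals omega
    · have h1 := hbig0 i y
      rw [← h, hrr] at h1
      rw [hrl, hrr] at h
      split_ifs at h h1
      all_goals omega
    · rw [hrr, hrr] at h
      congr 1
      apply Fin.ext
      split_ifs at h with h1 h2 h2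
      · rw [h1, h2]
      · omega
      · omega
      · omega
  obtain ⟨P, ⟨-, hP⟩, hPi⟩ := exists_colorful_primitive r hr Sum.inr Sum.inr_injective
    (fun i x => by rw [hrr, if_pos rfl]; exact Nat.zero_le _)
    (by
      rintro i j (x | l) hij hx
      · rw [hrr, if_neg hij.symm]
        have := hbig0 i x
        omega
      · exact absurd ⟨l, rfl⟩ hx)
    k₀ (Sum.elim (fun x => c x.1) id) (fun i => rfl)
  -- the indices whose slack is absent from `P`; their colors must come from grid points
  let C : Finset (Fin n) := Finset.univ.filter fun i => Sum.inr i ∉ P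
  have hC : ∀ i, i ∈ C ↔ Sum.inr i ∉ P := by simp [C]
  have hCx : ∀ i ∈ C, ∃ x : T, Sum.inl x ∈ P ∧ c x.1 = i := by
    intro i hi
    obtain ⟨u | j, hu, hui⟩ := Finset.mem_image.1 (hPi ▸ Finset.mem_univ i)
    · exact ⟨u, hu, hui⟩
    · have : j = i := hui
      subst this
      exact absurd hu ((hC _).1 hi)
  -- any grid point shows that some slack is missing from `P`
  have hCne : C.Nonempty := by
    obtain ⟨p₀, hp₀, -⟩ := exists_grid_ge N (0 : Fin n → ℕ) (by simp) k₀
    obtain ⟨i, hi⟩ := hP (Sum.inl ⟨p₀, mkT p₀ hp₀⟩)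
    refine ⟨i, (hC i).2 fun h => ?_⟩
    have := hi _ h
    rw [hrl, hrr, if_pos rfl] at this
    omega
  obtain ⟨k, hk⟩ := hCne
  obtain ⟨x₀, hx₀, -⟩ := hCx k hk
  choose μ hμ using fun i : Fin n => Finset.exists_min_image
    (Finset.univ.filter fun x : T => Sum.inl x ∈ P) (fun x => x.1 i) ⟨x₀, by simpa using hx₀⟩
  have hμP : ∀ i, Sum.inl (μ i) ∈ P := fun i => by simpa using (hμ i).1
  have hμle : ∀ i (x : T), Sum.inl x ∈ P → (μ i).1 i ≤ x.1 i :=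
    fun i x hx => (hμ i).2 x (by simpa using hx)
  let m : Fin n → ℕ := fun i => if i ∈ C then (μ i).1 i else 0
  have hmx : ∀ (x : T), Sum.inl x ∈ P → ∀ i, m i ≤ x.1 i := by
    intro x hx i
    simp only [m]
    split_ifs
    · exact hμle i x hx
    · exact Nat.zero_le _
  have hmN : ∑ i, m i ≤ N := by
    exact (Finset.sum_le_sum fun i _ => hmx x₀ hx₀ i).trans (hT x₀).le
  -- Otherwise some grid point exceeds `m` on all of `C`, contradicting primitivity.
  have hmN' : N < ∑ i, m i + n := by
    by_contra hcon
    obtain ⟨y, hy, hmy, hy0⟩ := exists_grid_ge N (fun i => m i + if i ∈ C then 1 else 0) (by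
      rw [Finset.sum_add_distrib]
      have : ∑ i : Fin n, (if i ∈ C then 1 else 0) ≤ n := by
        simpa using Finset.card_le_univ C
      omega) k
    obtain ⟨i, hi⟩ := hP (Sum.inl ⟨y, mkT y hy⟩)
    by_cases hiC : i ∈ C
    · have h1 := hmy i
      simp only [m, if_pos hiC] at h1
      exact absurd (hi _ (hμP i)) (not_le.2 (hlt i (μ i) ⟨y, mkT y hy⟩ h1))
    · have := hi _ (not_not.1 (mt (hC i).2 hiC))
      rw [hrl, hrr, if_pos rfl] at this
      omega
  -- a point above `m` of total `N` exceeds `m` by at most `n` in every coordinate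
  have hup : ∀ x : Fin n → ℕ, ∑ i, x i = N → (∀ i, m i ≤ x i) → ∀ i, x i ≤ m i + n := by
    intro x hx hmx i
    have h1 : ∑ j ∈ Finset.univ.erase i, m j ≤ ∑ j ∈ Finset.univ.erase i, x j :=
      Finset.sum_le_sum fun j _ => hmx j
    have h2 := Finset.add_sum_erase Finset.univ m (Finset.mem_univ i)
    have h3 := Finset.add_sum_erase Finset.univ x (Finset.mem_univ i)
    omega
  obtain ⟨p, hp, hmp, hpm⟩ := exists_grid_ge N m hmN k
  refine ⟨p, C, hp, ⟨k, hk⟩, ?_, ?_⟩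
  · intro i hi
    rw [hpm i (fun h => hi (h ▸ hk))]
    simp [m, hi]
  · intro i hi
    obtain ⟨x, hx, hcx⟩ := hCx i hi
    refine ⟨x.1, hT x, hcx, fun j => ?_⟩
    have h1 := hmx x hx j
    have h2 := hup x.1 (hT x) (hmx x hx) j
    have h3 := hmp j
    have h4 := hup p hp hmp j
    omega

open scoped Fin.NatCast Fin.CommRing in
/-- Open sets that cover the simplex, the `i`-th one missing the face `w i = 0`, have a common point
in the simplex. -/
theorem exists_mem_iInter_of_cover {n : ℕ} (hn : 0 < n) (U : Fin n → Set (Fin n → ℝ))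
    (hU : ∀ i, IsOpen (U i)) (hcov : stdSimplex ℝ (Fin n) ⊆ ⋃ i, U i)
    (hface : ∀ w ∈ stdSimplex ℝ (Fin n), ∀ i, w ∈ U i → w i ≠ 0) :
    ∃ w ∈ stdSimplex ℝ (Fin n), ∀ i, w ∈ U i := by
  classical
  have : NeZero n := ⟨hn.ne'⟩
  obtain ⟨δ, hδ, hball⟩ := lebesgue_number_lemma_of_metric
    (isCompact_stdSimplex ℝ (Fin n)) hU hcov
  obtain ⟨N, hN⟩ := exists_nat_gt (n / δ : ℝ)
  have hN0 : (0 : ℝ) < N := lt_of_le_of_lt (by positivity) hN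
  let q : (Fin n → ℕ) → Fin n → ℝ := fun x i => x i / N
  have hq : ∀ x, ∑ i, x i = N → q x ∈ stdSimplex ℝ (Fin n) := by
    intro x hx
    refine ⟨fun i => by positivity, ?_⟩
    rw [← Finset.sum_div, ← Nat.cast_sum, hx, div_self hN0.ne']
  have hcol : ∀ x : Fin n → ℕ, ∃ i, ∑ j, x j = N → Metric.ball (q x) δ ⊆ U i := by
    intro x
    by_cases hx : ∑ j, x j = N
    · obtain ⟨i, hi⟩ := hball (q x) (hq x hx)
      exact ⟨i, fun _ => hi⟩
    · exact ⟨0, fun h => absurd h hx⟩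
  choose c hc using hcol
  obtain ⟨p, C, hp, ⟨k, hk⟩, hp0, hC⟩ := exists_small_cell N 0 (fun x => c x + 1)
  have hpU : ∀ i, i + 1 ∈ C → q p ∈ U i := by
    intro i hi
    obtain ⟨x, hx, hci, hxp⟩ := hC _ hi
    have hci : c x = i := add_right_cancel hci
    rw [← hci]
    apply hc x hx
    rw [Metric.mem_ball, dist_pi_lt_iff hδ]
    intro j
    have h1 : (x j : ℝ) ≤ p j + n := by exact_mod_cast (hxp j).1
    have h2 : (p j : ℝ) ≤ x j + n := by exact_mod_cast (hxp j).2
    have h3 : (n : ℝ) / N < δ := by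
      rw [div_lt_iff₀ hδ] at hN
      rw [div_lt_iff₀ hN0]; linarith
    refine lt_of_le_of_lt ?_ h3
    simp only [q]
    rw [Real.dist_eq, ← sub_div, abs_div, abs_of_pos hN0]
    gcongr
    rw [abs_le]
    constructor <;> linarith
  have hpC : ∀ i, i + 1 ∈ C → i ∈ C := by
    intro i hi
    by_contra h
    exact hface _ (hq p hp) i (hpU i hi) (by simp [q, hp0 i h])
  have hall : ∀ i, i ∈ C := by
    have hback : ∀ t : ℕ, k - (t : Fin n) ∈ C := by
      intro t
      induction t with
      | zero => simpa using hk
      | succ t ih =>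
        apply hpC
        have h : k - ((t + 1 : ℕ) : Fin n) + 1 = k - (t : Fin n) := by push_cast; abel
        rwa [h]
    intro i
    have h := hback (k - i).val
    rwa [Fin.cast_val_eq_self, sub_sub_cancel] at h
  exact ⟨q p, hq p hp, fun i => hpU i (hall _)⟩

/-! ### The sets where the supremum is negative -/

/-- Writing the points `0 ≤ x ≤ w` as `w * s` with `0 ≤ s ≤ 1` makes the domain of the supremum
independent of `w`, so that openness follows from compactness. The `⊔ 0` extends `f` and `g`
continuously from the orthant to the whole space. -/
theorem isOpen_setOf_forall_lt_zero {n : ℕ} (f g : (Fin n → ℝ) → (Fin n → ℝ))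
    (hf : ContinuousOn f {x : Fin n → ℝ | 0 ≤ x})
    (hg : ContinuousOn g {x : Fin n → ℝ | 0 ≤ x}) (i : Fin n) :
    IsOpen {w : Fin n → ℝ | ∀ s ∈ Set.Icc (0 : Fin n → ℝ) 1 ∩ {s | s i = 1},
      ∀ t ∈ Set.Icc (0 : Fin n → ℝ) 1, f ((w * s) ⊔ 0) i + g ((w * t) ⊔ 0) i < 0} := by
  have hext : ∀ φ : (Fin n → ℝ) → (Fin n → ℝ), ContinuousOn φ {x : Fin n → ℝ | 0 ≤ x} →
      Continuous fun x => φ (x ⊔ 0) := fun φ hφ =>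
    hφ.comp_continuous (continuous_pi fun j => (continuous_apply j).sup continuous_const) fun x =>
      show (0 : Fin n → ℝ) ≤ x ⊔ 0 from le_sup_right
  have hF := hext f hf
  have hG := hext g hg
  have hcont : Continuous fun z : (Fin n → ℝ) × (Fin n → ℝ) × (Fin n → ℝ) =>
      f ((z.1 * z.2.1) ⊔ 0) i + g ((z.1 * z.2.2) ⊔ 0) i := by
    apply Continuous.add
    · exact (continuous_apply i).comp (hF.comp (by fun_prop :
        Continuous fun z : (Fin n → ℝ) × (Fin n → ℝ) × (Fin n → ℝ) => z.1 * z.2.1))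
    · exact (continuous_apply i).comp (hG.comp (by fun_prop :
        Continuous fun z : (Fin n → ℝ) × (Fin n → ℝ) × (Fin n → ℝ) => z.1 * z.2.2))
  have hK : IsCompact ((Set.Icc (0 : Fin n → ℝ) 1 ∩ {s | s i = 1}) ×ˢ Set.Icc (0 : Fin n → ℝ) 1) :=
    (isCompact_Icc.inter_right (isClosed_eq (continuous_apply i) continuous_const)).prod
      isCompact_Icc
  rw [isOpen_iff_eventually]
  intro w hw
  have := hK.eventually_forall_of_forall_eventually (x₀ := w)
    (P := fun w z => f ((w * z.1) ⊔ 0) i + g ((w * z.2) ⊔ 0) i < 0)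
    fun z hz => hcont.continuousAt.eventually (gt_mem_nhds (hw z.1 hz.1 z.2 hz.2))
  filter_upwards [this] with w' hw' s hs t ht
  exact hw' (s, t) ⟨hs, ht⟩

/-- Under the positivity conditions (P1), (P2) and condition (6) of the paper, there
exists `v` in the standard simplex with `v ≫ 0` and `h(v) ≪ 0`, where
`hᵢ(w) = sup{fᵢ(x)+gᵢ(y) : 0 ≤ x ≤ w, xᵢ = wᵢ, 0 ≤ y ≤ w}`. -/
theorem exists_strictly_positive_v (n : ℕ) (hn : 0 < n)
    (f g : (Fin n → ℝ) → (Fin n → ℝ))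
    (hf : ContinuousOn f {x : Fin n → ℝ | 0 ≤ x})
    (hg : ContinuousOn g {x : Fin n → ℝ | 0 ≤ x})
    (hgpos : ∀ x : Fin n → ℝ, 0 ≤ x → 0 ≤ g x)
    (hfpos : ∀ x : Fin n → ℝ, 0 ≤ x → ∀ i, x i = 0 → 0 ≤ f x i)
    (hmain : ∀ w : Fin n → ℝ, 0 ≤ w → w ≠ 0 → ∃ i : Fin n,
      sSup {r : ℝ | ∃ y : Fin n → ℝ, 0 ≤ y ∧ y ≤ w ∧ r = g y i} <
        - sSup {r : ℝ | ∃ x : Fin n → ℝ, 0 ≤ x ∧ x ≤ w ∧ x i = w i ∧ r = f x i}) :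
    ∃ v ∈ stdSimplex ℝ (Fin n), (∀ i : Fin n, 0 < v i) ∧ ∀ i : Fin n,
      sSup {r : ℝ | ∃ x y : Fin n → ℝ, 0 ≤ x ∧ x ≤ v ∧ x i = v i ∧
          0 ≤ y ∧ y ≤ v ∧ r = f x i + g y i} < 0 := by
  have hbox : ∀ w : Fin n → ℝ, 0 ≤ w → ∀ s ∈ Set.Icc (0 : Fin n → ℝ) 1,
      0 ≤ w * s ∧ w * s ≤ w ∧ (w * s) ⊔ 0 = w * s := by
    intro w hw s hs
    have h0 : 0 ≤ w * s := mul_nonneg hw hs.1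
    exact ⟨h0, fun j => mul_le_of_le_one_right (hw j) (hs.2 j), sup_eq_left.2 h0⟩
  have hscale : ∀ w x : Fin n → ℝ, 0 ≤ x → x ≤ w →
      ∃ s ∈ Set.Icc (0 : Fin n → ℝ) 1, w * s = x ∧ ∀ i, x i = w i → s i = 1 := by
    intro w x hx hxw
    refine ⟨fun j => if x j = w j then 1 else x j / w j, ⟨fun j => ?_, fun j => ?_⟩, ?_, ?_⟩
    · have h1 : 0 ≤ x j := hx j
      have h2 : 0 ≤ w j := h1.trans (hxw j)
      show (0 : ℝ) ≤ if x j = w j then 1 else x j / w j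
      split_ifs
      · exact zero_le_one
      · positivity
    · show (if x j = w j then (1 : ℝ) else x j / w j) ≤ 1
      split_ifs
      · exact le_rfl
      · exact div_le_one_of_le₀ (hxw j) ((hx j).trans (hxw j))
    · funext j
      show w j * (if x j = w j then (1 : ℝ) else x j / w j) = x j
      split_ifs with h
      · rw [mul_one, h]
      · have h1 : 0 ≤ x j := hx j
        have : w j ≠ 0 := fun h0 => h (le_antisymm (hxw j) (by rw [h0]; exact h1))
        field_simp
    · intro i hi
      simp [hi]
  have hbdd : ∀ φ : (Fin n → ℝ) → (Fin n → ℝ), ContinuousOn φ {x : Fin n → ℝ | 0 ≤ x} →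
      ∀ w i, BddAbove ((fun x => φ x i) '' Set.Icc (0 : Fin n → ℝ) w) := by
    intro φ hφ w i
    apply isCompact_Icc.bddAbove_image
    exact (continuous_apply i).comp_continuousOn (hφ.mono fun x hx => hx.1)
  have hface : ∀ w ∈ stdSimplex ℝ (Fin n), ∀ i, w ∈ {w : Fin n → ℝ |
      ∀ s ∈ Set.Icc (0 : Fin n → ℝ) 1 ∩ {s | s i = 1}, ∀ t ∈ Set.Icc (0 : Fin n → ℝ) 1,
        f ((w * s) ⊔ 0) i + g ((w * t) ⊔ 0) i < 0} → w i ≠ 0 := by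
    intro w hw i hwU hwi
    have hw0 : 0 ≤ w := hw.1
    have h1 : (1 : Fin n → ℝ) ∈ Set.Icc (0 : Fin n → ℝ) 1 := ⟨zero_le_one, le_rfl⟩
    have h := hwU 1 ⟨h1, rfl⟩ 1 h1
    rw [mul_one, sup_eq_left.2 hw0] at h
    have h2 := hfpos w hw0 i hwi
    have h3 : 0 ≤ g w i := hgpos w hw0 i
    linarith
  obtain ⟨v, hv, hvU⟩ := exists_mem_iInter_of_cover hn _
    (isOpen_setOf_forall_lt_zero f g hf hg) (by
      intro w hw
      have hw0 : 0 ≤ w := hw.1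
      have hwne : w ≠ 0 := by
        rintro rfl
        simpa using hw.2
      obtain ⟨i, hi⟩ := hmain w hw0 hwne
      refine Set.mem_iUnion.2 ⟨i, fun s hs t ht => ?_⟩
      obtain ⟨hs0, hsw, hse⟩ := hbox w hw0 s hs.1
      obtain ⟨ht0, htw, hte⟩ := hbox w hw0 t ht
      rw [hse, hte]
      have h1 : g (w * t) i ≤ sSup {r : ℝ | ∃ y : Fin n → ℝ, 0 ≤ y ∧ y ≤ w ∧ r = g y i} := by
        refine le_csSup ((hbdd g hg w i).mono ?_) ⟨_, ht0, htw, rfl⟩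
        rintro _ ⟨y, hy0, hyw, rfl⟩
        exact ⟨y, ⟨hy0, hyw⟩, rfl⟩
      have h2 : f (w * s) i ≤
          sSup {r : ℝ | ∃ x : Fin n → ℝ, 0 ≤ x ∧ x ≤ w ∧ x i = w i ∧ r = f x i} := by
        have hsi : s i = 1 := hs.2
        refine le_csSup ((hbdd f hf w i).mono ?_) ⟨_, hs0, hsw, by simp [hsi], rfl⟩
        rintro _ ⟨y, hy0, hyw, -, rfl⟩
        exact ⟨y, ⟨hy0, hyw⟩, rfl⟩
      linarith) hface
  have hv0 : 0 ≤ v := hv.1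
  refine ⟨v, hv, fun i => lt_of_le_of_ne (hv0 i) fun h => ?_, fun i => ?_⟩
  · exact hface v hv i (hvU i) h.symm
  · have hmem : sSup {r : ℝ | ∃ x y : Fin n → ℝ, 0 ≤ x ∧ x ≤ v ∧ x i = v i ∧
          0 ≤ y ∧ y ≤ v ∧ r = f x i + g y i} ∈ {r : ℝ | ∃ x y : Fin n → ℝ, 0 ≤ x ∧ x ≤ v ∧
          x i = v i ∧ 0 ≤ y ∧ y ≤ v ∧ r = f x i + g y i} := by
      have hK : IsCompact ((Set.Icc 0 v ∩ {x | x i = v i}) ×ˢ Set.Icc 0 v) :=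
        (isCompact_Icc.inter_right (isClosed_eq (continuous_apply i) continuous_const)).prod
          isCompact_Icc
      have hcont : ContinuousOn (fun z : (Fin n → ℝ) × (Fin n → ℝ) => f z.1 i + g z.2 i)
          ((Set.Icc 0 v ∩ {x | x i = v i}) ×ˢ Set.Icc 0 v) :=
        ((continuous_apply i).comp_continuousOn
          (hf.comp continuous_fst.continuousOn fun z hz => hz.1.1.1)).add
        ((continuous_apply i).comp_continuousOn
          (hg.comp continuous_snd.continuousOn fun z hz => hz.2.1))
      refine IsCompact.sSup_mem ?_ ⟨_, v, v, hv0, le_rfl, rfl, hv0, le_rfl, rfl⟩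
      convert hK.image_of_continuousOn hcont using 1
      ext a
      constructor
      · rintro ⟨x, y, hx0, hxv, hxi, hy0, hyv, rfl⟩
        exact ⟨(x, y), ⟨⟨⟨hx0, hxv⟩, hxi⟩, hy0, hyv⟩, rfl⟩
      · rintro ⟨⟨x, y⟩, ⟨⟨⟨hx0, hxv⟩, hxi⟩, hy0, hyv⟩, rfl⟩
        exact ⟨x, y, hx0, hxv, hxi, hy0, hyv, rfl⟩
    obtain ⟨x, y, hx0, hxv, hxi, hy0, hyv, hr⟩ := hmem
    rw [hr]
    obtain ⟨s, hs, rfl, hsi⟩ := hscale v x hx0 hxv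
    obtain ⟨t, ht, rfl, -⟩ := hscale v y hy0 hyv
    have h := hvU i s ⟨hs, hsi i hxi⟩ t ht
    rwa [sup_eq_left.2 hx0, sup_eq_left.2 hy0] at h
end
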